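/- arXiv:1004.1953 — 3 statements merged into one kernel-verified Lean document; each statement's English description precedes it below -/
import Mathlib

section
/- The function f(u) = (3/(2π)) · e^{5u/2}/(1 + e^{3u}) is a probability density on ℝ (i.e., ∫_{−∞}^∞ f(u) du = 1), its mean is ∫_{−∞}^∞ u f(u) du = π/√3, and its second moment ∫_{−∞}^∞ u² f(u) du is finite. -/
open MeasureTheory ProbabilityTheory Filter Real Topology

noncomputable section

lemma real_beta_integral (a : ℝ) (h0 : 0 < a) (h1 : a < 1) :
    ∫ x in Set.Ioo (0:ℝ) 1, x ^ (a - 1) * (1 - x) ^ (-a) = π / Real.sin (π * a) := by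
  have h := Complex.Gamma_mul_Gamma_eq_betaIntegral (s := (a:ℂ)) (t := ((1 - a : ℝ) : ℂ))
    (by simpa using h0) (by simpa using h1)
  have h2 : Complex.betaIntegral a ((1 - a : ℝ) : ℂ)
      = ((∫ x in Set.Ioo (0:ℝ) 1, x ^ (a - 1) * (1 - x) ^ (-a) : ℝ) : ℂ) := by
    rw [Complex.betaIntegral, intervalIntegral.integral_of_le zero_le_one,
      integral_Ioc_eq_integral_Ioo, ← integral_complex_ofReal]
    refine setIntegral_congr_fun measurableSet_Ioo fun x hx => ?_
    have hx1 : 0 ≤ 1 - x := by linarith [hx.2]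
    simp only [Complex.ofReal_mul, Complex.ofReal_cpow hx.1.le, Complex.ofReal_cpow hx1]
    push_cast
    congr 2
    ring
  rw [h2] at h
  have h3 := Complex.Gamma_mul_Gamma_one_sub (a : ℂ)
  have h4 : (a:ℂ) + ((1 - a : ℝ) : ℂ) = 1 := by push_cast; ring
  rw [h4, Complex.Gamma_one, one_mul] at h
  push_cast at h h3
  rw [h3] at h
  exact_mod_cast h.symm

lemma mgf_integral (s : ℝ) (h0 : 0 < s) (h3 : s < 3) :
    ∫ u : ℝ, Real.exp (s * u) / (1 + Real.exp (3 * u)) = π / 3 / Real.sin (π * (s / 3)) := by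
  have hb := real_beta_integral (s / 3) (by positivity) (by linarith)
  rw [← range_sigmoid, ← Set.image_univ,
    integral_image_eq_integral_abs_deriv_smul MeasurableSet.univ
      (fun x _ => (hasDerivAt_sigmoid x).hasDerivWithinAt) sigmoid_injective.injOn,
    setIntegral_univ] at hb
  have hc := Measure.integral_comp_mul_left
    (fun v : ℝ => Real.exp (s / 3 * v) / (1 + Real.exp v)) 3
  have e1 : ∀ v : ℝ, |Real.sigmoid v * (1 - Real.sigmoid v)| •
      (Real.sigmoid v ^ (s / 3 - 1) * (1 - Real.sigmoid v) ^ (-(s / 3)))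
      = Real.exp (s / 3 * v) / (1 + Real.exp v) := by
    intro v
    have p1 := Real.sigmoid_pos v
    have p2 : 0 < 1 - Real.sigmoid v := by linarith [Real.sigmoid_lt_one v]
    have q : 1 - Real.sigmoid v = 1 / (1 + Real.exp v) := by
      rw [← Real.sigmoid_neg, Real.sigmoid_def, neg_neg, one_div]
    have q2 : Real.sigmoid v = Real.exp v * (1 - Real.sigmoid v) := by
      rw [← Real.sigmoid_neg, ← Real.sigmoid_mul_rexp_neg, mul_left_comm, ← Real.exp_add]
      simp
    rw [abs_of_pos (mul_pos p1 p2), smul_eq_mul, Real.rpow_sub_one p1.ne', Real.rpow_neg p2.le]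
    have : Real.sigmoid v ^ (s / 3) = Real.exp (s / 3 * v) * (1 - Real.sigmoid v) ^ (s / 3) := by
      conv_lhs => rw [q2]
      rw [Real.mul_rpow (Real.exp_pos v).le p2.le, ← Real.exp_mul, mul_comm v]
    rw [this]
    have p3 := Real.rpow_pos_of_pos p2 (s / 3)
    rw [div_eq_mul_one_div (Real.exp _), ← q]
    field_simp
  simp_rw [e1] at hb
  rw [hb] at hc
  have e2 : ∀ u : ℝ, s / 3 * (3 * u) = s * u := fun u => by ring
  simp_rw [e2] at hc
  rw [hc, abs_of_pos (by norm_num), smul_eq_mul]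
  ring

/-- The function `f(u) = (3/(2π)) e^{5u/2}/(1 + e^{3u})` is a probability density on `ℝ`,
with mean `π/√3` and finite second moment. -/
theorem step_density_moments :
    (∫ u : ℝ, (3 / (2 * Real.pi)) * Real.exp (5 * u / 2) / (1 + Real.exp (3 * u))) = 1 ∧
    (∫ u : ℝ, u * ((3 / (2 * Real.pi)) * Real.exp (5 * u / 2) / (1 + Real.exp (3 * u))))
      = Real.pi / Real.sqrt 3 ∧
    Integrable (fun u : ℝ =>
      u ^ 2 * ((3 / (2 * Real.pi)) * Real.exp (5 * u / 2) / (1 + Real.exp (3 * u)))) := by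
  let w : ℝ → NNReal := fun u => ⟨1 / (1 + Real.exp (3 * u)), by positivity⟩
  have hw : Measurable w := by
    apply Measurable.subtype_mk
    fun_prop
  have hsm : ∀ u x : ℝ, w u • x = 1 / (1 + Real.exp (3 * u)) * x := fun u x => rfl
  let μ : Measure ℝ := volume.withDensity (fun u => (w u : ENNReal))
  have hint : ∀ g : ℝ → ℝ, ∫ u, g u ∂μ = ∫ u, g u / (1 + Real.exp (3 * u)) := by
    intro g
    rw [integral_withDensity_eq_integral_smul hw]
    refine integral_congr_ae (ae_of_all _ fun u => ?_)
    simp only [hsm]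
    ring
  have hmgf : ∀ s, 0 < s → s < 3 → mgf id μ s = π / 3 / Real.sin (π * (s / 3)) := by
    intro s h0 h3
    rw [mgf, hint, ← mgf_integral s h0 h3]
    rfl
  have hmem : (5/2 : ℝ) ∈ interior (integrableExpSet id μ) := by
    refine mem_interior.2 ⟨Set.Ioo 0 3, fun s hs => ?_, isOpen_Ioo, by norm_num⟩
    apply Integrable.of_integral_ne_zero
    have h := hmgf s hs.1 hs.2
    rw [mgf] at h
    rw [h]
    have : 0 < Real.sin (π * (s / 3)) := by
      apply Real.sin_pos_of_pos_of_lt_pi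
      · have := hs.1
        positivity
      · nlinarith [Real.pi_pos, hs.2]
    positivity
  have hang : π * (5 / 2 / 3) = π - π / 6 := by ring
  have hsin : Real.sin (π * (5 / 2 / 3)) = 1 / 2 := by
    rw [hang, Real.sin_pi_sub, Real.sin_pi_div_six]
  have hcos : Real.cos (π * (5 / 2 / 3)) = - (√3 / 2) := by
    rw [hang, Real.cos_pi_sub, Real.cos_pi_div_six]
  have hexp : ∀ u : ℝ, 5 * u / 2 = 5 / 2 * u := fun u => by ring
  have hpi := Real.pi_pos
  refine ⟨?_, ?_, ?_⟩
  · have := mgf_integral (5/2) (by norm_num) (by norm_num)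
    rw [hsin] at this
    simp_rw [hexp, mul_div_assoc, integral_const_mul, this]
    field_simp
  · have hd := hasDerivAt_mgf hmem
    have hd2 : HasDerivAt (fun s => π / 3 / Real.sin (π * (s / 3)))
        (∫ u, id u * Real.exp (5/2 * id u) ∂μ) (5/2) := by
      refine hd.congr_of_eventuallyEq ?_
      filter_upwards [isOpen_Ioo.mem_nhds (show (5/2:ℝ) ∈ Set.Ioo (0:ℝ) 3 by norm_num)] with s hs
      exact (hmgf s hs.1 hs.2).symm
    have hin : HasDerivAt (fun s : ℝ => π * (s / 3)) (π * (1 / 3)) (5/2) :=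
      ((hasDerivAt_id (5/2:ℝ)).div_const 3).const_mul π
    have hd3 := (hasDerivAt_const (5/2:ℝ) (π / 3)).div hin.sin (by rw [hsin]; norm_num)
    have hu := hd2.unique hd3
    rw [hint, hsin, hcos] at hu
    have e : ∀ u : ℝ, u * ((3 / (2 * π)) * Real.exp (5 * u / 2) / (1 + Real.exp (3 * u)))
        = 3 / (2 * π) * (id u * Real.exp (5/2 * id u) / (1 + Real.exp (3 * u))) := by
      intro u
      rw [hexp]
      simp only [id]
      ring
    simp_rw [e]
    rw [integral_const_mul, hu]
    have h3 : √3 * √3 = 3 := Real.mul_self_sqrt (by norm_num)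
    have h3p : 0 < √3 := by positivity
    field_simp
    nlinarith
  · have h := integrable_pow_mul_exp_of_mem_interior_integrableExpSet hmem 2
    have h2 := ((integrable_withDensity_iff_integrable_smul hw).1 h).const_mul (3 / (2 * π))
    refine h2.congr (ae_of_all _ fun u => ?_)
    simp only [hsm, id, hexp]
    ring
end
end

section
/- Let E be a Polish space with a distinguished isolated point ∅, let Ω be the space of sequences ω = (ω_n¹, ω_n²)_{n∈ℤ} with values in [−∞,∞) × E, with the product topology, and let (P_v)_{v>0} be a family of Borel probability measures on Ω, each giving full mass to the set of sequences with lim_{n→−∞} ω_n¹ = −∞ and limsup_{n→+∞} ω_n¹ = +∞. Suppose there is a Borel probability law Q on Ω_+ , giving full mass to sequences with limsup_{n→+∞} ω_n¹ = +∞, such that for every x ∈ ℝ the pushforwards ((P_v ∘ Θ_x^{-1})_+) converge weakly to Q as v → 0. Then there exists a unique spatially stationary probability law P on Ω such that P_+ = Q, and moreover P_v ∘ Θ_x^{-1} converges weakly to P as v → 0, for every x ∈ ℝ. -/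
open MeasureTheory ProbabilityTheory Filter Real Topology

noncomputable section

/-- The half-line `[-∞, ∞)`, realized as the extended reals without `⊤`,
with the subspace topology and Borel structure. -/
abbrev NT := {x : EReal // x ≠ ⊤}

/-- The space `Ω` of two-sided sequences with values in `[-∞,∞) × E`,
with the product topology. -/
abbrev Om (E : Type*) := ℤ → NT × E

variable {E : Type*} [TopologicalSpace E] [PolishSpace E] [MeasurableSpace E] [BorelSpace E]

/-- The hitting time `T_x(ω) = inf {n ∈ ℤ : ω_n¹ > x}`. -/
def hitT (x : ℝ) (ω : Om E) : ℤ := sInf {n : ℤ | (x : EReal) < ((ω n).1 : EReal)}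

lemma sub_ne_top' (a : NT) (x : ℝ) : (a : EReal) - (x : EReal) ≠ ⊤ := by
  rw [sub_eq_add_neg]
  exact (EReal.add_lt_top a.2 (by simp [EReal.neg_eq_top_iff])).ne

/-- The spatial translation operator `Θ_x(ω) = (ω_{n+T_x}¹ - x, ω_{n+T_x}²)_{n ∈ ℤ}`. -/
def Theta (x : ℝ) (ω : Om E) : Om E := fun n =>
  (⟨((ω (n + hitT x ω)).1 : EReal) - (x : EReal), sub_ne_top' _ _⟩, (ω (n + hitT x ω)).2)

/-- The point `-∞` of `[-∞, ∞)`. -/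
def botNT : NT := ⟨⊥, bot_ne_top⟩

/-- The projection `ω ↦ ω_+` onto `Ω_+`, replacing `ω_n` by `(-∞, ∅)` for `n < 0`. -/
def plusProj (e0 : E) (ω : Om E) : Om E := fun n => if n < 0 then (botNT, e0) else ω n


set_option linter.unusedSectionVars false

/-- The hitting set. -/
def hitA (x : ℝ) (ω : Om E) : Set ℤ := {n : ℤ | (x : EReal) < ((ω n).1 : EReal)}

/-- The hitting time is genuinely attained. -/
def Good (x : ℝ) (ω : Om E) : Prop := (hitA x ω).Nonempty ∧ BddBelow (hitA x ω)

/-- Values before index zero are nonpositive. -/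
def NegL (ω : Om E) : Prop := ∀ j : ℤ, j < 0 → ((ω j).1 : EReal) ≤ 0

/-- Truncation of coordinates below `-m`. -/
def rho (e0 : E) (m : ℕ) (ω : Om E) : Om E :=
  fun n => if n < -(m : ℤ) then (botNT, e0) else ω n

lemma plusProj_eq_rho (e0 : E) : plusProj e0 = rho e0 0 := by
  funext ω n; simp [plusProj, rho]

lemma hitT_spec {x : ℝ} {ω : Om E} (h : Good x ω) :
    (x : EReal) < ((ω (hitT x ω)).1 : EReal) := by
  have := Int.csInf_mem h.1 h.2
  exact this

lemma hitT_le {x : ℝ} {ω : Om E} (h : Good x ω) {n : ℤ}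
    (hn : (x : EReal) < ((ω n).1 : EReal)) : hitT x ω ≤ n :=
  csInf_le h.2 hn

lemma lt_hitT {x : ℝ} {ω : Om E} (h : Good x ω) {j : ℤ} (hj : j < hitT x ω) :
    ((ω j).1 : EReal) ≤ x := by
  by_contra hc
  exact absurd (hitT_le h (not_le.1 hc)) (not_le.2 hj)

lemma hitT_isLeast {x : ℝ} {ω : Om E} {T : ℤ} (h1 : (x : EReal) < ((ω T).1 : EReal))
    (h2 : ∀ j < T, ((ω j).1 : EReal) ≤ x) : Good x ω ∧ hitT x ω = T := by
  have hl : IsLeast (hitA x ω) T := ⟨h1, fun n hn => by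
    by_contra hc
    exact absurd (h2 n (not_le.1 hc)) (not_le.2 hn)⟩
  exact ⟨⟨⟨T, h1⟩, ⟨T, hl.2⟩⟩, hl.csInf_eq⟩

lemma hitT_not_good {x : ℝ} {ω : Om E} (h : ¬ Good x ω) : hitT x ω = 0 := by
  unfold Good at h
  rw [not_and_or] at h
  rcases h with h | h
  · change sInf (hitA x ω) = 0
    rw [Set.not_nonempty_iff_eq_empty.1 h]
    exact Int.csInf_empty
  · exact Int.csInf_of_not_bddBelow h

lemma ereal_lt_sub (a : EReal) (y K : ℝ) :
    (K : EReal) < a - (y : EReal) ↔ ((y + K : ℝ) : EReal) < a := by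
  induction a with
  | bot => simp
  | top => simp only [EReal.top_sub_coe]; exact ⟨fun _ => EReal.coe_lt_top _, fun _ => EReal.coe_lt_top _⟩
  | coe a =>
    norm_cast
    constructor <;> intro h <;> linarith

lemma ereal_sub_sub (a : EReal) (y K : ℝ) :
    a - (y : EReal) - (K : EReal) = a - ((y + K : ℝ) : EReal) := by
  induction a with
  | bot => simp
  | top => simp only [EReal.top_sub_coe]
  | coe a =>
    norm_cast
    ring

lemma mem_hitA_Theta {y K : ℝ} {ω : Om E} {n : ℤ} :
    n ∈ hitA K (Theta y ω) ↔ n + hitT y ω ∈ hitA (y + K) ω := by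
  simp only [hitA, Theta, Set.mem_ofPred_eq]
  exact ereal_lt_sub _ _ _

lemma good_Theta {y K : ℝ} {ω : Om E} : Good K (Theta y ω) ↔ Good (y + K) ω := by
  constructor
  · rintro ⟨⟨n, hn⟩, ⟨b, hb⟩⟩
    refine ⟨⟨_, mem_hitA_Theta.1 hn⟩, ⟨b + hitT y ω, fun k hk => ?_⟩⟩
    have hk' : k - hitT y ω ∈ hitA K (Theta y ω) := mem_hitA_Theta.2 (by simpa using hk)
    have := hb hk'
    linarith
  · rintro ⟨⟨n, hn⟩, ⟨b, hb⟩⟩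
    refine ⟨⟨n - hitT y ω, mem_hitA_Theta.2 (by simpa using hn)⟩, ⟨b - hitT y ω, fun k hk => ?_⟩⟩
    have := hb (mem_hitA_Theta.1 hk)
    linarith

lemma Theta_Theta {y K : ℝ} {ω : Om E} (h : Good (y + K) ω) :
    Theta K (Theta y ω) = Theta (y + K) ω := by
  have hT : hitT K (Theta y ω) = hitT (y + K) ω - hitT y ω := by
    refine (hitT_isLeast ?_ ?_).2
    · have := hitT_spec h
      refine mem_hitA_Theta.2 ?_
      simpa [hitA] using this
    · intro j hj
      by_contra hc
      have := mem_hitA_Theta.1 (show j ∈ hitA K (Theta y ω) from not_le.1 hc)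
      have := hitT_le h this
      linarith
  funext n
  have e : n + hitT K (Theta y ω) + hitT y ω = n + hitT (y + K) ω := by rw [hT]; ring
  show (_, _) = (_, _)
  refine Prod.ext (Subtype.ext ?_) ?_
  · simp only [Theta, e]
    exact ereal_sub_sub _ _ _
  · simp only [Theta, e]

lemma neg_Theta {x : ℝ} {ω : Om E} (h : Good x ω) : NegL (Theta x ω) := by
  intro j hj
  have h1 := lt_hitT h (j := j + hitT x ω) (by linarith)
  simp only [Theta]
  by_contra hc
  have := (ereal_lt_sub _ x 0).1 (by simpa using not_le.1 hc)
  simp at this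
  exact absurd h1 (not_le.2 this)

lemma pos_Theta {x : ℝ} {ω : Om E} (h : Good x ω) :
    (0 : EReal) ≤ ((Theta x ω 0).1 : EReal) := by
  have h1 := hitT_spec h
  simp only [Theta, zero_add]
  have := (ereal_lt_sub _ x 0).2 (by simpa using h1)
  simpa using this.le

lemma NegL.good {x : ℝ} {ω : Om E} (h : NegL ω) (hx : 0 ≤ x) (hne : (hitA x ω).Nonempty) :
    Good x ω := by
  refine ⟨hne, 0, fun n hn => ?_⟩
  by_contra hc
  have h1 := h n (not_le.1 hc)
  have h2 : (x : EReal) < ((ω n).1 : EReal) := hn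
  have h3 : (0 : EReal) ≤ x := by exact_mod_cast hx
  exact absurd (h3.trans_lt h2) (not_lt.2 h1)

lemma NegL.hitT_nonneg {x : ℝ} {ω : Om E} (h : NegL ω) (hx : 0 ≤ x) (hg : Good x ω) :
    0 ≤ hitT x ω := by
  by_contra hc
  have h1 := h _ (not_le.1 hc)
  have h2 := hitT_spec hg
  have h3 : (0 : EReal) ≤ x := by exact_mod_cast hx
  exact absurd (h3.trans_lt h2) (not_lt.2 h1)

lemma NegL.hitA_rho {x : ℝ} {ω : Om E} (h : NegL ω) (hx : 0 ≤ x) (e0 : E) (m : ℕ) :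
    hitA x (rho e0 m ω) = hitA x ω := by
  ext n
  simp only [hitA, rho, Set.mem_ofPred_eq]
  split_ifs with hn
  · have h1 := h n (by omega)
    have h3 : (0 : EReal) ≤ x := by exact_mod_cast hx
    constructor
    · intro h'
      simp [botNT] at h'
    · intro h'
      exact absurd (h3.trans_lt h') (not_lt.2 h1)
  · rfl

lemma NegL.hitT_rho {x : ℝ} {ω : Om E} (h : NegL ω) (hx : 0 ≤ x) (e0 : E) (m : ℕ) :
    hitT x (rho e0 m ω) = hitT x ω := by
  change sInf (hitA x (rho e0 m ω)) = sInf (hitA x ω)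
  rw [h.hitA_rho hx]

lemma NegL.good_rho {x : ℝ} {ω : Om E} (h : NegL ω) (hx : 0 ≤ x) (e0 : E) (m : ℕ)
    (hg : Good x ω) : Good x (rho e0 m ω) := by
  unfold Good
  rw [h.hitA_rho hx]; exact hg

lemma rho_Theta_rho {x : ℝ} {ω : Om E} (h : NegL ω) (hx : 0 ≤ x) (e0 : E) (m m' : ℕ)
    (hT : (m : ℤ) ≤ hitT x ω + m') :
    rho e0 m (Theta x (rho e0 m' ω)) = rho e0 m (Theta x ω) := by
  funext n
  by_cases hn : n < -(m : ℤ)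
  · simp [rho, hn]
  · have h2 : ¬ (n + hitT x ω < -(m' : ℤ)) := by omega
    have e := h.hitT_rho hx e0 m'
    have e2 : rho e0 m' ω (n + hitT x ω) = ω (n + hitT x ω) := by simp [rho, h2]
    have e3 : Theta x (rho e0 m' ω) n = Theta x ω n := by
      refine Prod.ext (Subtype.ext ?_) ?_
      · simp only [Theta, e, e2]
      · simp only [Theta, e, e2]
    have e4 : ∀ η : Om E, rho e0 m η n = η n := fun η => by simp [rho, hn]
    rw [e4, e4, e3]

lemma rho_rho (e0 : E) {m m' : ℕ} (h : m ≤ m') (ω : Om E) :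
    rho e0 m (rho e0 m' ω) = rho e0 m ω := by
  funext n
  simp only [rho]
  split_ifs <;> first | rfl | omega

lemma Theta_rho_zero_lt {x : ℝ} {ω : Om E} (e0 : E) (m : ℕ) (h : NegL ω) (hx : 0 ≤ x)
    (hg : Good x ω) (hT : hitT x ω < m) :
    ∃ j : ℕ, j < m ∧ (x : EReal) < ((rho e0 0 ω j).1 : EReal) := by
  have h0 := h.hitT_nonneg hx hg
  refine ⟨(hitT x ω).toNat, by omega, ?_⟩
  rw [Int.toNat_of_nonneg h0]
  have := hitT_spec hg
  simp only [rho]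
  rw [if_neg (by simpa using h0)]
  exact this

/-! ### measurability and continuity -/

instance instPolishNT : PolishSpace NT :=
  (isOpen_compl_singleton (x := (⊤ : EReal))).polishSpace

instance instBorelOm : BorelSpace (Om E) := Pi.borelSpace

instance instPolishOm : PolishSpace (Om E) := inferInstance

lemma measurable_coord (n : ℤ) : Measurable (fun ω : Om E => ((ω n).1 : EReal)) := by
  fun_prop

lemma continuous_coord (n : ℤ) : Continuous (fun ω : Om E => ((ω n).1 : EReal)) := by
  fun_prop

lemma measurableSet_mem_hitA (x : ℝ) (n : ℤ) : MeasurableSet {ω : Om E | n ∈ hitA x ω} :=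
  measurableSet_lt measurable_const (measurable_coord n)

lemma measurableSet_nonempty (x : ℝ) : MeasurableSet {ω : Om E | (hitA x ω).Nonempty} := by
  have : {ω : Om E | (hitA x ω).Nonempty} = ⋃ n : ℤ, {ω : Om E | n ∈ hitA x ω} := by
    ext ω; simp [Set.Nonempty]
  rw [this]
  exact MeasurableSet.iUnion fun n => measurableSet_mem_hitA x n

lemma measurableSet_bdd (x : ℝ) : MeasurableSet {ω : Om E | BddBelow (hitA x ω)} := by
  have : {ω : Om E | BddBelow (hitA x ω)} =
      ⋃ b : ℤ, ⋂ n : ℤ, {ω : Om E | n ∈ hitA x ω}ᶜ ∪ {ω | b ≤ n} := by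
    ext ω
    simp [BddBelow, Set.Nonempty, lowerBounds, imp_iff_not_or]
  rw [this]
  exact MeasurableSet.iUnion fun b => MeasurableSet.iInter fun n =>
    (measurableSet_mem_hitA x n).compl.union (MeasurableSet.const _)

lemma measurableSet_good (x : ℝ) : MeasurableSet {ω : Om E | Good x ω} :=
  (measurableSet_nonempty x).inter (measurableSet_bdd x)

lemma isClosed_neg : IsClosed {ω : Om E | NegL ω} := by
  have : {ω : Om E | NegL ω} = ⋂ j : ℤ, ⋂ _ : j < 0, {ω : Om E | ((ω j).1 : EReal) ≤ 0} := by
    ext ω; simp [NegL]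
  rw [this]
  exact isClosed_iInter fun j => isClosed_iInter fun _ =>
    isClosed_le (continuous_coord j) continuous_const

lemma measurable_hitT (x : ℝ) : Measurable (hitT (E := E) x) := by
  refine measurable_to_countable' fun n => ?_
  have : hitT (E := E) x ⁻¹' {n} =
      ({ω : Om E | Good x ω} ∩ ({ω : Om E | n ∈ hitA x ω} ∩
        ⋂ j : ℤ, ⋂ _ : j < n, {ω : Om E | j ∈ hitA x ω}ᶜ)) ∪
      ({ω : Om E | Good x ω}ᶜ ∩ {ω | n = 0}) := by
    ext ω
    simp only [Set.mem_preimage, Set.mem_singleton_iff, Set.mem_union, Set.mem_inter_iff,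
      Set.mem_ofPred_eq, Set.mem_iInter, Set.mem_compl_iff]
    by_cases hg : Good x ω
    · simp only [hg, true_and, not_true, false_and, or_false]
      constructor
      · rintro rfl
        exact ⟨hitT_spec hg, fun j hj hm => absurd (lt_hitT hg hj) (not_le.2 hm)⟩
      · rintro ⟨h1, h2⟩
        exact (hitT_isLeast h1 fun j hj => not_lt.1 (h2 j hj)).2
    · simp only [hg, false_and, not_false_eq_true, true_and, false_or, hitT_not_good hg, eq_comm]
  rw [this]
  refine ((measurableSet_good x).inter ((measurableSet_mem_hitA x n).inter ?_)).union
    ((measurableSet_good x).compl.inter (MeasurableSet.const _))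
  exact MeasurableSet.iInter fun j => MeasurableSet.iInter fun _ =>
    (measurableSet_mem_hitA x j).compl

/-- subtraction of a real on `NT` -/
def subNT (x : ℝ) (a : NT) : NT := ⟨(a : EReal) - (x : EReal), sub_ne_top' _ _⟩

lemma continuous_subNT (x : ℝ) : Continuous (subNT x) := by
  refine Continuous.subtype_mk ?_ _
  rw [continuous_iff_continuousAt]
  intro a
  simp only [sub_eq_add_neg]
  have h := EReal.continuousAt_add (p := ((a : EReal), -(x : EReal)))
    (Or.inl a.2) (Or.inr (by rw [← EReal.coe_neg]; exact EReal.coe_ne_top _))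
  exact ContinuousAt.comp (f := fun a : NT => ((a : EReal), -(x : EReal))) h
    (by fun_prop)

lemma measurable_Theta (x : ℝ) : Measurable (Theta (E := E) x) := by
  rw [measurable_pi_iff]
  intro n
  have h1 : Measurable (fun p : ℤ × Om E => p.2 (n + p.1)) :=
    measurable_from_prod_countable_right fun k => (measurable_pi_apply (n + k) : Measurable fun ω : Om E => ω (n + k))
  have h2 : Measurable (fun ω : Om E => ω (n + hitT x ω)) :=
    h1.comp ((measurable_hitT x).prodMk measurable_id)
  exact ((continuous_subNT x).measurable.comp (measurable_fst.comp h2)).prodMk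
    (measurable_snd.comp h2)

lemma continuous_rho (e0 : E) (m : ℕ) : Continuous (rho e0 m) := by
  refine continuous_pi fun n => ?_
  unfold rho
  split_ifs <;> fun_prop

lemma measurable_rho (e0 : E) (m : ℕ) : Measurable (rho e0 m) := (continuous_rho e0 m).measurable

lemma tendsto_rho (e0 : E) (ω : Om E) : Tendsto (fun m => rho e0 m ω) atTop (𝓝 ω) := by
  rw [tendsto_pi_nhds]
  intro n
  refine tendsto_const_nhds.congr' ?_
  filter_upwards [eventually_ge_atTop n.natAbs] with m hm
  simp only [rho]
  rw [if_neg (by omega)]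

/-- Continuity of the truncated translation. -/
lemma continuousAt_h (e0 : E) (m m' : ℕ) {x : ℝ} {ω : Om E} (hg : Good x (rho e0 m' ω))
    (hne : ∀ j : ℤ, ((ω j).1 : EReal) ≠ x) :
    ContinuousAt (fun ω => rho e0 m (Theta x (rho e0 m' ω))) ω := by
  set T := hitT x (rho e0 m' ω) with hT
  have hTm : -(m' : ℤ) ≤ T := by
    by_contra hc
    have := hitT_spec hg
    rw [← hT] at this
    simp only [rho] at this
    rw [if_pos (not_le.1 hc)] at this
    simp [botNT] at this
  have ev : ∀ᶠ ω' in 𝓝 ω, hitT x (rho e0 m' ω') = T := by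
    have e1 : ∀ᶠ ω' in 𝓝 ω, (x : EReal) < ((ω' T).1 : EReal) := by
      refine (continuous_coord T).continuousAt.eventually_const_lt ?_
      have := hitT_spec hg
      rw [← hT] at this
      simp only [rho] at this
      rwa [if_neg (not_lt.2 hTm)] at this
    have e2 : ∀ᶠ ω' in 𝓝 ω, ∀ j ∈ Finset.Ico (-(m' : ℤ)) T, ((ω' j).1 : EReal) < x := by
      rw [Filter.eventually_all_finset]
      intro j hj
      rw [Finset.mem_Ico] at hj
      refine (continuous_coord j).continuousAt.eventually_lt_const ?_
      refine lt_of_le_of_ne ?_ (hne j)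
      have := lt_hitT hg hj.2
      simp only [rho] at this
      rwa [if_neg (not_lt.2 hj.1)] at this
    filter_upwards [e1, e2] with ω' h1 h2
    refine (hitT_isLeast ?_ ?_).2
    · simp only [rho]
      rwa [if_neg (not_lt.2 hTm)]
    · intro j hj
      simp only [rho]
      split_ifs with hjm
      · simp [botNT]
      · exact (h2 j (Finset.mem_Ico.2 ⟨not_lt.1 hjm, hj⟩)).le
  have hc : Continuous (fun ω' : Om E => rho e0 m (fun n =>
      (subNT x (rho e0 m' ω' (n + T)).1, (rho e0 m' ω' (n + T)).2))) := by
    refine (continuous_rho e0 m).comp (continuous_pi fun n => ?_)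
    have h1 : Continuous (fun ω' : Om E => rho e0 m' ω' (n + T)) :=
      (continuous_apply (n + T) : Continuous fun ω : Om E => ω (n + T)).comp (continuous_rho e0 m')
    exact ((continuous_subNT x).comp (continuous_fst.comp h1)).prodMk (continuous_snd.comp h1)
  refine hc.continuousAt.congr ?_
  filter_upwards [ev] with ω' h'
  refine congrArg (rho e0 m) ?_
  funext n
  refine Prod.ext (Subtype.ext ?_) ?_
  · simp only [Theta, h', subNT]
  · simp only [Theta, h']

/-! ### weak convergence -/

/-- Weak convergence of measures along a filter. -/
def WC {ι : Type*} (L : Filter ι) (ν : ι → Measure (Om E)) (μ : Measure (Om E)) : Prop :=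
  ∀ f : BoundedContinuousFunction (Om E) ℝ,
    Tendsto (fun i => ∫ ω, f ω ∂(ν i)) L (𝓝 (∫ ω, f ω ∂μ))

/-- Bundling as a probability measure. -/
def toPM (μ : Measure (Om E)) (h : IsProbabilityMeasure μ) : ProbabilityMeasure (Om E) := ⟨μ, h⟩

lemma WC_iff {ι : Type*} {L : Filter ι} {ν : ι → Measure (Om E)} {μ : Measure (Om E)}
    [hν : ∀ i, IsProbabilityMeasure (ν i)] [hμ : IsProbabilityMeasure μ] :
    WC L ν μ ↔ Tendsto (fun i => toPM (ν i) (hν i)) L (𝓝 (toPM μ hμ)) := by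
  rw [ProbabilityMeasure.tendsto_iff_forall_integral_tendsto]
  rfl

lemma WC.closed {ι : Type*} {L : Filter ι} {ν : ι → Measure (Om E)} {μ : Measure (Om E)}
    [hν : ∀ i, IsProbabilityMeasure (ν i)] [hμ : IsProbabilityMeasure μ]
    (h : WC L ν μ) {F : Set (Om E)} (hF : IsClosed F) :
    limsup (fun i => ν i F) L ≤ μ F := by
  have h1 := WC_iff.1 h
  exact ProbabilityMeasure.limsup_measure_closed_le_of_tendsto h1 hF

lemma WC.open {ι : Type*} {L : Filter ι} {ν : ι → Measure (Om E)} {μ : Measure (Om E)}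
    [hν : ∀ i, IsProbabilityMeasure (ν i)] [hμ : IsProbabilityMeasure μ]
    (h : WC L ν μ) {G : Set (Om E)} (hG : IsOpen G) :
    μ G ≤ liminf (fun i => ν i G) L := by
  have h1 := WC_iff.1 h
  exact ProbabilityMeasure.le_liminf_measure_open_of_tendsto h1 hG

lemma WC_of_open {ι : Type*} {L : Filter ι} [L.IsCountablyGenerated]
    {ν : ι → Measure (Om E)} {μ : Measure (Om E)}
    [hν : ∀ i, IsProbabilityMeasure (ν i)] [hμ : IsProbabilityMeasure μ]
    (h : ∀ G, IsOpen G → μ G ≤ liminf (fun i => ν i G) L) : WC L ν μ :=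
  WC_iff.2 (tendsto_of_forall_isOpen_le_liminf' h)

lemma WC.ae_closed {ι : Type*} {L : Filter ι} [L.NeBot]
    {ν : ι → Measure (Om E)} {μ : Measure (Om E)}
    [hν : ∀ i, IsProbabilityMeasure (ν i)] [hμ : IsProbabilityMeasure μ]
    (h : WC L ν μ) {F : Set (Om E)} (hF : IsClosed F) (hi : ∀ i, ∀ᵐ ω ∂ν i, ω ∈ F) :
    ∀ᵐ ω ∂μ, ω ∈ F := by
  have h1 := h.closed hF
  have h2 : ∀ i, ν i F = 1 := fun i => (prob_compl_eq_zero_iff hF.measurableSet).1 (hi i)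
  simp only [h2, limsup_const] at h1
  exact (prob_compl_eq_zero_iff hF.measurableSet).2 (le_antisymm prob_le_one h1)

/-- Continuous mapping theorem. -/
lemma WC.map {ι : Type*} {L : Filter ι} [L.IsCountablyGenerated]
    {ν : ι → Measure (Om E)} {μ : Measure (Om E)}
    [hν : ∀ i, IsProbabilityMeasure (ν i)] [hμ : IsProbabilityMeasure μ]
    (h : WC L ν μ) {g : Om E → Om E} (hg : Measurable g) (hc : ∀ᵐ ω ∂μ, ContinuousAt g ω) :
    WC L (fun i => (ν i).map g) (μ.map g) := by
  have := fun i => Measure.isProbabilityMeasure_map (μ := ν i) hg.aemeasurable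
  have := Measure.isProbabilityMeasure_map (μ := μ) hg.aemeasurable
  refine WC_of_open fun G hG => ?_
  rw [Measure.map_apply hg hG.measurableSet]
  simp only [Measure.map_apply hg hG.measurableSet]
  calc μ (g ⁻¹' G) ≤ μ (interior (g ⁻¹' G)) := by
        refine measure_mono_ae ?_
        filter_upwards [hc] with ω hω hm
        exact mem_interior_iff_mem_nhds.2 (hω (hG.mem_nhds hm))
    _ ≤ liminf (fun i => ν i (interior (g ⁻¹' G))) L := h.open isOpen_interior
    _ ≤ _ := liminf_le_liminf (Eventually.of_forall fun i => measure_mono interior_subset)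

lemma WC.unique {ι : Type*} {L : Filter ι} [L.NeBot]
    {ν : ι → Measure (Om E)} {μ μ' : Measure (Om E)}
    [IsProbabilityMeasure μ] [IsProbabilityMeasure μ']
    (h : WC L ν μ) (h' : WC L ν μ') : μ = μ' :=
  ext_of_forall_integral_eq_of_IsFiniteMeasure fun f => tendsto_nhds_unique (h f) (h' f)

lemma integral_map_bcf (μ : Measure (Om E)) {g : Om E → Om E} (hg : Measurable g)
    (f : BoundedContinuousFunction (Om E) ℝ) :
    ∫ ω, f ω ∂(μ.map g) = ∫ ω, f (g ω) ∂μ :=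
  integral_map hg.aemeasurable f.continuous.aestronglyMeasurable

lemma tendsto_integral_bcf {α : Type*} {l : Filter α} [l.IsCountablyGenerated]
    (μ : Measure (Om E)) [IsProbabilityMeasure μ] {g : α → Om E → Om E} {g0 : Om E → Om E}
    (hg : ∀ a, Measurable (g a)) (h : ∀ᵐ ω ∂μ, Tendsto (fun a => g a ω) l (𝓝 (g0 ω)))
    (f : BoundedContinuousFunction (Om E) ℝ) :
    Tendsto (fun a => ∫ ω, f (g a ω) ∂μ) l (𝓝 (∫ ω, f (g0 ω) ∂μ)) := by
  refine tendsto_integral_filter_of_dominated_convergence (fun _ => ‖f‖) ?_ ?_ ?_ ?_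
  · exact Eventually.of_forall fun a =>
      (f.continuous.measurable.comp (hg a)).aestronglyMeasurable
  · exact Eventually.of_forall fun a => Eventually.of_forall fun ω => f.norm_coe_le_norm _
  · exact integrable_const _
  · filter_upwards [h] with ω hω
    exact (f.continuous.tendsto _).comp hω

lemma ext_of_rho (e0 : E) {μ μ' : Measure (Om E)}
    [IsProbabilityMeasure μ] [IsProbabilityMeasure μ']
    (h : ∀ m, μ.map (rho e0 m) = μ'.map (rho e0 m)) : μ = μ' := by
  refine ext_of_forall_integral_eq_of_IsFiniteMeasure fun f => ?_
  have h1 := tendsto_integral_bcf μ (g0 := id) (measurable_rho e0)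
    (Eventually.of_forall (tendsto_rho e0)) f
  have h2 := tendsto_integral_bcf μ' (g0 := id) (measurable_rho e0)
    (Eventually.of_forall (tendsto_rho e0)) f
  simp only [← integral_map_bcf _ (measurable_rho e0 _), h] at h1 h2
  exact tendsto_nhds_unique h1 h2

lemma exists_rho_open (e0 : E) {G : Set (Om E)} (hG : IsOpen G) :
    ∃ V : ℕ → Set (Om E), (∀ m, IsOpen (V m)) ∧ Monotone (fun m => rho e0 m ⁻¹' V m) ∧
      G = ⋃ m, rho e0 m ⁻¹' V m := by
  refine ⟨fun m => ⋃₀ {U | IsOpen U ∧ rho e0 m ⁻¹' U ⊆ G}, fun m => isOpen_sUnion fun U hU => hU.1,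
    ?_, ?_⟩
  · intro m m' hmm ω hω
    obtain ⟨U, ⟨hU, hUG⟩, hωU⟩ := hω
    have e : rho e0 m' ⁻¹' (rho e0 m ⁻¹' U) = rho e0 m ⁻¹' U := by
      ext η; simp [rho_rho e0 hmm]
    refine ⟨rho e0 m ⁻¹' U, ⟨hU.preimage (continuous_rho e0 m), by rw [e]; exact hUG⟩, ?_⟩
    simpa [rho_rho e0 hmm] using hωU
  · apply Set.Subset.antisymm
    · intro ω hω
      obtain ⟨I, u, hu, hI⟩ := isOpen_pi_iff.1 hG ω hω
      refine Set.mem_iUnion.2 ⟨I.sup Int.natAbs, (I : Set ℤ).pi u, ⟨?_, ?_⟩, ?_⟩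
      · exact isOpen_set_pi I.finite_toSet fun i hi => (hu i hi).1
      all_goals
        have key : ∀ η : Om E, ∀ i ∈ I, rho e0 (I.sup Int.natAbs) η i = η i := by
          intro η i hi
          have : i.natAbs ≤ I.sup Int.natAbs := Finset.le_sup hi
          simp only [rho]
          rw [if_neg (by omega)]
      · intro η hη
        refine hI fun i hi => ?_
        rw [← key η i hi]
        exact hη i hi
      · intro i hi
        rw [key ω i hi]
        exact (hu i hi).2
    · refine Set.iUnion_subset fun m ω hω => ?_
      obtain ⟨U, ⟨_, hUG⟩, hωU⟩ := hω
      exact hUG hωU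

lemma WC_of_rho {ι : Type*} {L : Filter ι} [L.IsCountablyGenerated] (e0 : E)
    {ν : ι → Measure (Om E)} {μ : Measure (Om E)}
    [hν : ∀ i, IsProbabilityMeasure (ν i)] [hμ : IsProbabilityMeasure μ]
    (h : ∀ m, WC L (fun i => (ν i).map (rho e0 m)) (μ.map (rho e0 m))) : WC L ν μ := by
  have := fun m i => Measure.isProbabilityMeasure_map (μ := ν i) (measurable_rho e0 m).aemeasurable
  have := fun m => Measure.isProbabilityMeasure_map (μ := μ) (measurable_rho e0 m).aemeasurable
  refine WC_of_open fun G hG => ?_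
  obtain ⟨V, hV, hmono, rfl⟩ := exists_rho_open e0 hG
  rw [hmono.measure_iUnion]
  refine iSup_le fun m => ?_
  have h1 := (h m).open (hV m)
  simp only [Measure.map_apply (measurable_rho e0 m) (hV m).measurableSet] at h1
  exact h1.trans (liminf_le_liminf (Eventually.of_forall fun i =>
    measure_mono (Set.subset_iUnion (fun m => rho e0 m ⁻¹' V m) m)))

/-! ### atoms -/

lemma countable_atoms (μ : Measure (Om E)) [IsProbabilityMeasure μ] :
    {x : ℝ | μ {ω : Om E | ∃ j : ℤ, ((ω j).1 : EReal) = x} ≠ 0}.Countable := by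
  have h1 : ∀ j : ℤ, {x : ℝ | 0 < μ {ω : Om E | ((ω j).1 : EReal) = x}}.Countable := fun j => by
    refine Measure.countable_meas_pos_of_disjoint_iUnion
      (As := fun x : ℝ => {ω : Om E | ((ω j).1 : EReal) = x}) (fun x => ?_) ?_
    · exact measurableSet_eq_fun (measurable_coord j) measurable_const
    · intro x y hxy
      refine Set.disjoint_left.2 fun ω h1 h2 => hxy ?_
      have h1' : ((ω j).1 : EReal) = x := h1
      have h2' : ((ω j).1 : EReal) = y := h2
      exact EReal.coe_injective (h1'.symm.trans h2')
  refine (Set.countable_iUnion h1).mono fun x hx => ?_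
  by_contra hc
  simp only [Set.mem_iUnion, Set.mem_ofPred_eq, not_exists, not_lt, nonpos_iff_eq_zero] at hc
  refine hx ?_
  have : {ω : Om E | ∃ j : ℤ, ((ω j).1 : EReal) = x} =
    ⋃ j : ℤ, {ω : Om E | ((ω j).1 : EReal) = x} := by ext; simp
  rw [this]
  exact measure_iUnion_null hc

lemma frequently_noatom (μ : Measure (Om E)) [IsProbabilityMeasure μ] (x : ℝ) :
    ∃ᶠ y : ℝ in 𝓝[>] x, ∀ᵐ ω ∂μ, ∀ j : ℤ, ((ω j).1 : EReal) ≠ y := by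
  intro hc
  obtain ⟨u, hu, hs⟩ := mem_nhdsGT_iff_exists_Ioo_subset.1 hc
  have h1 : (Set.Ioo x u).Countable := by
    refine (countable_atoms μ).mono fun y hy => ?_
    by_contra h0
    refine hs hy ?_
    change ∀ᵐ (ω : Om E) ∂μ, ∀ (j : ℤ), ((ω j).1 : EReal) ≠ y
    rw [ae_iff]
    simpa using h0
  have h2 := h1.measure_zero volume
  rw [Real.volume_Ioo] at h2
  simp at h2
  exact absurd hu (not_lt.2 h2)

/-! ### the basic comparison estimate -/

/-- Truncated translation. -/
def hh (e0 : E) (m : ℕ) (x : ℝ) (m' : ℕ) (ω : Om E) : Om E :=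
  rho e0 m (Theta x (rho e0 m' ω))

lemma measurable_hh (e0 : E) (m : ℕ) (x : ℝ) (m' : ℕ) : Measurable (hh e0 m x m') :=
  (measurable_rho e0 m).comp ((measurable_Theta x).comp (measurable_rho e0 m'))

/-- The early-hit set. -/
def Bad (m : ℕ) (K : ℝ) : Set (Om E) := {ω | ∃ j : ℕ, j < m ∧ (K : EReal) ≤ ((ω j).1 : EReal)}

lemma isClosed_Bad (m : ℕ) (K : ℝ) : IsClosed (Bad (E := E) m K) := by
  have : Bad (E := E) m K = ⋃ j ∈ Finset.range m, {ω : Om E | (K : EReal) ≤ ((ω (j : ℤ)).1 : EReal)} := by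
    ext ω; simp [Bad]
  rw [this]
  exact isClosed_biUnion_finset fun j _ => isClosed_le continuous_const (continuous_coord j)

lemma est_eq {e0 : E} {m : ℕ} {K : ℝ} (hK : 0 ≤ K) {ω : Om E} (hn : NegL ω) (hg : Good K ω)
    (hb : rho e0 0 ω ∉ Bad m K) : hh e0 m K 0 ω = rho e0 m (Theta K ω) := by
  refine rho_Theta_rho hn hK e0 m 0 ?_
  by_contra hc
  obtain ⟨j, hj, hj'⟩ := Theta_rho_zero_lt e0 m hn hK hg (by simpa using hc)
  exact hb ⟨j, hj, hj'.le⟩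

lemma est_set {e0 : E} {m : ℕ} {K : ℝ} (hK : 0 ≤ K) {μ : Measure (Om E)}
    (hn : ∀ᵐ ω ∂μ, NegL ω) (hg : ∀ᵐ ω ∂μ, Good K ω) {A : Set (Om E)} (hA : MeasurableSet A) :
    ((μ.map (Theta K)).map (rho e0 m)) A ≤
      ((μ.map (rho e0 0)).map (hh e0 m K 0)) A + (μ.map (rho e0 0)) (Bad m K) := by
  rw [Measure.map_map (measurable_rho e0 m) (measurable_Theta K),
    Measure.map_map (measurable_hh e0 m K 0) (measurable_rho e0 0),
    Measure.map_apply ((measurable_rho e0 m).comp (measurable_Theta K)) hA,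
    Measure.map_apply ((measurable_hh e0 m K 0).comp (measurable_rho e0 0)) hA,
    Measure.map_apply (measurable_rho e0 0) (isClosed_Bad m K).measurableSet]
  refine (measure_mono_ae ?_).trans (measure_union_le _ _)
  filter_upwards [hn, hg] with ω h1 h2 h3
  by_cases hb : rho e0 0 ω ∈ Bad m K
  · exact Or.inr hb
  · refine Or.inl ?_
    have e := est_eq hK h1 h2 hb
    show hh e0 m K 0 (rho e0 0 ω) ∈ A
    have : hh e0 m K 0 (rho e0 0 ω) = hh e0 m K 0 ω := by simp [hh, rho_rho]
    rw [this, e]; exact h3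

lemma est_int {e0 : E} {m : ℕ} {K : ℝ} (hK : 0 ≤ K) {μ : Measure (Om E)} [IsProbabilityMeasure μ]
    (hn : ∀ᵐ ω ∂μ, NegL ω) (hg : ∀ᵐ ω ∂μ, Good K ω) (f : BoundedContinuousFunction (Om E) ℝ) :
    |(∫ ω, f ω ∂((μ.map (Theta K)).map (rho e0 m))) -
      ∫ ω, f ω ∂((μ.map (rho e0 0)).map (hh e0 m K 0))| ≤
      2 * ‖f‖ * (μ.map (rho e0 0)).real (Bad m K) := by
  have hm1 := (measurable_rho e0 m).comp (measurable_Theta K)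
  have hm2 := (measurable_hh e0 m K 0).comp (measurable_rho e0 0)
  rw [Measure.map_map (measurable_rho e0 m) (measurable_Theta K),
    Measure.map_map (measurable_hh e0 m K 0) (measurable_rho e0 0),
    integral_map_bcf _ hm1, integral_map_bcf _ hm2,
    map_measureReal_apply (measurable_rho e0 0) (isClosed_Bad m K).measurableSet]
  have hi : ∀ g : Om E → Om E, Measurable g → Integrable (fun ω => f (g ω)) μ := fun g hg =>
    Integrable.of_bound (f.continuous.measurable.comp hg).aestronglyMeasurable ‖f‖
      (Eventually.of_forall fun ω => f.norm_coe_le_norm _)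
  rw [← integral_sub (hi _ hm1) (hi _ hm2)]
  have hB : MeasurableSet (rho e0 0 ⁻¹' Bad m K) :=
    measurable_rho e0 0 (isClosed_Bad m K).measurableSet
  have e : 2 * ‖f‖ * μ.real (rho e0 0 ⁻¹' Bad m K) =
      ∫ ω, (rho e0 0 ⁻¹' Bad m K).indicator (fun _ => 2 * ‖f‖) ω ∂μ := by
    rw [integral_indicator hB, setIntegral_const, smul_eq_mul, mul_comm]
  rw [e, ← Real.norm_eq_abs]
  refine norm_integral_le_of_norm_le ((integrable_const _).indicator hB) ?_
  filter_upwards [hn, hg] with ω h1 h2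
  by_cases hb : rho e0 0 ω ∈ Bad m K
  · rw [Set.indicator_of_mem (show ω ∈ rho e0 0 ⁻¹' Bad m K from hb)]
    refine (norm_sub_le _ _).trans ?_
    have a1 := f.norm_coe_le_norm ((rho e0 m ∘ Theta K) ω)
    have a2 := f.norm_coe_le_norm ((hh e0 m K 0 ∘ rho e0 0) ω)
    linarith
  · rw [Set.indicator_of_notMem (show ω ∉ rho e0 0 ⁻¹' Bad m K from hb)]
    have e := est_eq hK h1 h2 hb
    have : hh e0 m K 0 (rho e0 0 ω) = hh e0 m K 0 ω := by simp [hh, rho_rho]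
    simp only [Function.comp_apply, this, e, sub_self, norm_zero, le_refl]

/-! ### one-sided stationarity -/

lemma tendsto_Theta_right {x : ℝ} {ω : Om E} (h : Good x ω) :
    Tendsto (fun y => Theta y ω) (𝓝[>] x) (𝓝 (Theta x ω)) := by
  have hs := hitT_spec h
  have hev : ∀ᶠ y : ℝ in 𝓝[>] x, hitT y ω = hitT x ω := by
    have h1 : ∀ᶠ y : ℝ in 𝓝[>] x, (y : EReal) < ((ω (hitT x ω)).1 : EReal) :=
      nhdsWithin_le_nhds ((continuous_coe_real_ereal.tendsto x).eventually_lt_const hs)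
    filter_upwards [h1, self_mem_nhdsWithin] with y hy hxy
    refine (hitT_isLeast hy fun j hj => (lt_hitT h hj).trans ?_).2
    exact EReal.coe_le_coe_iff.2 (le_of_lt hxy)
  rw [tendsto_pi_nhds]
  intro n
  have h2 : Tendsto (fun y : ℝ => (((⟨((ω (n + hitT x ω)).1 : EReal) - (y : EReal),
      sub_ne_top' _ _⟩ : NT), (ω (n + hitT x ω)).2) : NT × E)) (𝓝[>] x) (𝓝 (Theta x ω n)) := by
    refine Tendsto.prodMk_nhds ?_ tendsto_const_nhds
    refine tendsto_nhdsWithin_of_tendsto_nhds ?_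
    rw [tendsto_subtype_rng]
    simp only
    rcases (ω (n + hitT x ω)).1 with ⟨a, ha⟩
    simp only
    induction a with
    | bot => simp
    | top => exact absurd rfl ha
    | coe a =>
      simp only [← EReal.coe_sub]
      exact (continuous_coe_real_ereal.comp (continuous_const.sub continuous_id)).tendsto x
  refine h2.congr' ?_
  filter_upwards [hev] with y hy
  simp only [Theta, hy]

/-- The data of the problem after restriction. -/
structure Fam {ι : Type*} (e0 : E) (L : Filter ι) (N : ι → ℝ → Measure (Om E))
    (Q : Measure (Om E)) : Prop where
  prob : ∀ i x, IsProbabilityMeasure (N i x)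
  neg : ∀ i x, ∀ᵐ ω ∂N i x, NegL ω
  pos : ∀ i x, ∀ᵐ ω ∂N i x, (0 : EReal) ≤ ((ω 0).1 : EReal)
  good : ∀ i x y, ∀ᵐ ω ∂N i x, Good y ω
  shift : ∀ i x y, (N i x).map (Theta y) = N i (x + y)
  conv : ∀ x, WC L (fun i => (N i x).map (rho e0 0)) Q
  qprob : IsProbabilityMeasure Q
  qminus : ∀ᵐ ω ∂Q, ∀ n : ℤ, n < 0 → ω n = (botNT, e0)
  qne : ∀ x, ∀ᵐ ω ∂Q, (hitA x ω).Nonempty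

lemma pm_map (μ : Measure (Om E)) [IsProbabilityMeasure μ] {g : Om E → Om E} (hg : Measurable g) :
    IsProbabilityMeasure (μ.map g) := Measure.isProbabilityMeasure_map hg.aemeasurable

lemma map_hh_eq (e0 : E) (m : ℕ) {x : ℝ} (hx : 0 ≤ x) {μ : Measure (Om E)}
    (hn : ∀ᵐ ω ∂μ, NegL ω) (hg : ∀ᵐ ω ∂μ, Good x ω) :
    (μ.map (rho e0 m)).map (hh e0 m x m) = (μ.map (Theta x)).map (rho e0 m) := by
  rw [Measure.map_map (measurable_hh _ _ _ _) (measurable_rho _ _),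
    Measure.map_map (measurable_rho _ _) (measurable_Theta _)]
  refine Measure.map_congr ?_
  filter_upwards [hn, hg] with ω h1 h2
  have h0 := h1.hitT_nonneg hx h2
  simp only [Function.comp_apply, hh, rho_rho e0 le_rfl]
  exact rho_Theta_rho h1 hx e0 m m (by linarith)

lemma ae_cont_hh (e0 : E) (m m' : ℕ) {x : ℝ} (hx : 0 ≤ x) {μ : Measure (Om E)}
    (hn : ∀ᵐ ω ∂μ, NegL ω) (hg : ∀ᵐ ω ∂μ, Good x ω)
    (hne : ∀ᵐ ω ∂μ, ∀ j : ℤ, ((ω j).1 : EReal) ≠ x) :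
    ∀ᵐ ω ∂(μ.map (rho e0 m')), ContinuousAt (hh e0 m x m') ω := by
  have hS : MeasurableSet {ω : Om E | Good x (rho e0 m' ω) ∧ ∀ j : ℤ, ((ω j).1 : EReal) ≠ x} := by
    refine MeasurableSet.inter ((measurable_rho e0 m') (measurableSet_good x)) ?_
    have : {ω : Om E | ∀ j : ℤ, ((ω j).1 : EReal) ≠ x} =
        ⋂ j : ℤ, {ω : Om E | ((ω j).1 : EReal) = x}ᶜ := by ext; simp
    change MeasurableSet {ω : Om E | ∀ j : ℤ, ((ω j).1 : EReal) ≠ x}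
    rw [this]
    exact MeasurableSet.iInter fun j =>
      (measurableSet_eq_fun (measurable_coord j) measurable_const).compl
  have h1 : ∀ᵐ ω ∂(μ.map (rho e0 m')),
      ω ∈ {ω : Om E | Good x (rho e0 m' ω) ∧ ∀ j : ℤ, ((ω j).1 : EReal) ≠ x} := by
    refine (ae_map_iff (measurable_rho e0 m').aemeasurable hS).2 ?_
    filter_upwards [hn, hg, hne] with ω h1 h2 h3
    refine ⟨?_, fun j => ?_⟩
    · rw [rho_rho e0 le_rfl]; exact h1.good_rho hx e0 m' h2
    · simp only [rho]
      split_ifs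
      · exact (EReal.bot_lt_coe x).ne
      · exact h3 j
  filter_upwards [h1] with ω hω
  exact continuousAt_h e0 m m' hω.1 hω.2

lemma stat_plus {ι : Type*} {e0 : E} {L : Filter ι} [L.NeBot] [L.IsCountablyGenerated]
    {N : ι → ℝ → Measure (Om E)} {Q : Measure (Om E)} (F : Fam e0 L N Q)
    {μ : Measure (Om E)} [IsProbabilityMeasure μ]
    (hn : ∀ᵐ ω ∂μ, NegL ω) (hg : ∀ x : ℝ, 0 ≤ x → ∀ᵐ ω ∂μ, Good x ω) (m : ℕ)
    (hw : ∀ y, WC L (fun i => (N i y).map (rho e0 m)) (μ.map (rho e0 m)))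
    {x : ℝ} (hx : 0 ≤ x) : (μ.map (Theta x)).map (rho e0 m) = μ.map (rho e0 m) := by
  have hA : ∀ y : ℝ, 0 ≤ y → (∀ᵐ ω ∂μ, ∀ j : ℤ, ((ω j).1 : EReal) ≠ y) →
      (μ.map (Theta y)).map (rho e0 m) = μ.map (rho e0 m) := by
    intro y hy hne
    have := F.prob
    have := fun i => pm_map (N i 0) (measurable_rho e0 m)
    have := pm_map μ (measurable_rho e0 m)
    have := pm_map μ (measurable_Theta y)
    have := pm_map (μ.map (Theta y)) (measurable_rho e0 m)
    have h1 := (hw 0).map (measurable_hh e0 m y m) (ae_cont_hh e0 m m hy hn (hg y hy) hne)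
    rw [map_hh_eq e0 m hy hn (hg y hy)] at h1
    have h2 : ∀ i, ((N i 0).map (rho e0 m)).map (hh e0 m y m) = (N i y).map (rho e0 m) := by
      intro i
      rw [map_hh_eq e0 m hy (F.neg i 0) (F.good i 0 y), F.shift, zero_add]
    simp only [h2] at h1
    exact h1.unique (hw y)
  have := pm_map μ (measurable_rho e0 m)
  have := pm_map μ (measurable_Theta x)
  have := pm_map (μ.map (Theta x)) (measurable_rho e0 m)
  refine ext_of_forall_integral_eq_of_IsFiniteMeasure fun f => ?_
  have hl := tendsto_integral_bcf (l := 𝓝[>] x) μ (g := fun y => rho e0 m ∘ Theta y)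
    (g0 := rho e0 m ∘ Theta x)
    (fun y => (measurable_rho e0 m).comp (measurable_Theta y))
    (by
      filter_upwards [hg x hx] with ω hω
      exact ((continuous_rho e0 m).tendsto _).comp (tendsto_Theta_right hω)) f
  have hfr : ∃ᶠ y in 𝓝[>] x, ∫ ω, f ((rho e0 m ∘ Theta y) ω) ∂μ =
      ∫ ω, f ω ∂(μ.map (rho e0 m)) := by
    refine ((frequently_noatom μ x).and_eventually self_mem_nhdsWithin).mono ?_
    rintro y ⟨hy, hxy⟩
    rw [← hA y (hx.trans (le_of_lt hxy)) hy,
      Measure.map_map (measurable_rho _ _) (measurable_Theta _),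
      integral_map_bcf _ ((measurable_rho e0 m).comp (measurable_Theta y))]
  rw [Measure.map_map (measurable_rho _ _) (measurable_Theta _),
      integral_map_bcf _ ((measurable_rho e0 m).comp (measurable_Theta x))]
  exact tendsto_nhds_unique_of_frequently_eq hl tendsto_const_nhds hfr

section QF
variable {ι : Type*} {e0 : E} {L : Filter ι}
    {N : ι → ℝ → Measure (Om E)} {Q : Measure (Om E)}

lemma Fam.qmap (F : Fam e0 L N Q) : Q.map (rho e0 0) = Q := by
  conv_rhs => rw [← Measure.map_id (μ := Q)]
  refine Measure.map_congr ?_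
  filter_upwards [F.qminus] with ω hω
  funext n
  simp only [rho, id]
  split_ifs with h
  · exact (hω n (by simpa using h)).symm
  · rfl

lemma Fam.qneg (F : Fam e0 L N Q) : ∀ᵐ ω ∂Q, NegL ω := by
  filter_upwards [F.qminus] with ω hω n hn
  rw [hω n hn]; exact bot_le

lemma Fam.qgood (F : Fam e0 L N Q) (x : ℝ) : ∀ᵐ ω ∂Q, Good x ω := by
  filter_upwards [F.qminus, F.qne x] with ω hω h1
  refine ⟨h1, 0, fun n hn => ?_⟩
  by_contra hc
  have h2 : (x : EReal) < ((ω n).1 : EReal) := hn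
  rw [hω n (not_le.1 hc)] at h2
  exact not_lt_bot h2

lemma Fam.qpos [L.NeBot] (F : Fam e0 L N Q) : ∀ᵐ ω ∂Q, (0 : EReal) ≤ ((ω 0).1 : EReal) := by
  have := F.prob
  have := F.qprob
  have := fun i => pm_map (N i 0) (measurable_rho e0 0)
  have hc : IsClosed {ω : Om E | (0 : EReal) ≤ ((ω 0).1 : EReal)} :=
    isClosed_le continuous_const (continuous_coord 0)
  refine (F.conv 0).ae_closed hc fun i => ?_
  refine (ae_map_iff (measurable_rho e0 0).aemeasurable hc.measurableSet).2 ?_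
  filter_upwards [F.pos i 0] with ω hω
  simpa [rho] using hω

lemma Fam.qstat [L.NeBot] [L.IsCountablyGenerated] (F : Fam e0 L N Q) {x : ℝ} (hx : 0 ≤ x) :
    (Q.map (Theta x)).map (rho e0 0) = Q := by
  have := F.qprob
  have h := stat_plus F F.qneg (fun x _ => F.qgood x) 0
    (fun y => by rw [F.qmap]; exact F.conv y) hx
  rw [F.qmap] at h
  exact h

lemma bad_anti {m : ℕ} {K K' : ℝ} (h : K ≤ K') : Bad (E := E) m K' ⊆ Bad m K := by
  rintro ω ⟨j, hj, hK⟩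
  exact ⟨j, hj, (EReal.coe_le_coe_iff.2 h).trans hK⟩

lemma tendsto_coord_ge (μ : Measure (Om E)) [IsProbabilityMeasure μ] (j : ℤ) :
    Tendsto (fun K : ℕ => μ {ω : Om E | ((K : ℝ) : EReal) ≤ ((ω j).1 : EReal)}) atTop (𝓝 0) := by
  have h := tendsto_measure_iInter_atTop (μ := μ)
    (s := fun K : ℕ => {ω : Om E | ((K : ℝ) : EReal) ≤ ((ω j).1 : EReal)})
    (fun K => (measurableSet_le measurable_const (measurable_coord j)).nullMeasurableSet)
    (fun K K' hK ω hω => le_trans (EReal.coe_le_coe_iff.2 (by exact_mod_cast hK)) hω)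
    ⟨0, measure_ne_top _ _⟩
  have e : (⋂ K : ℕ, {ω : Om E | ((K : ℝ) : EReal) ≤ ((ω j).1 : EReal)}) = ∅ := by
    ext ω
    simp only [Set.mem_iInter, Set.mem_ofPred_eq, Set.mem_empty_iff_false, iff_false, not_forall,
      not_le]
    rcases (ω j).1 with ⟨a, ha⟩
    simp only
    induction a with
    | bot => exact ⟨0, EReal.bot_lt_coe _⟩
    | top => exact absurd rfl ha
    | coe a =>
      obtain ⟨n, hn⟩ := exists_nat_gt a
      exact ⟨n, EReal.coe_lt_coe_iff.2 hn⟩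
  rw [e, measure_empty] at h
  exact h

lemma tendsto_bad (μ : Measure (Om E)) [IsProbabilityMeasure μ] (m : ℕ) :
    Tendsto (fun K : ℕ => μ (Bad m K)) atTop (𝓝 0) := by
  have h1 : Tendsto (fun K : ℕ => ∑ j ∈ Finset.range m,
      μ {ω : Om E | ((K : ℝ) : EReal) ≤ ((ω (j : ℤ)).1 : EReal)}) atTop (𝓝 0) := by
    have := tendsto_finsetSum (Finset.range m) fun j _ => tendsto_coord_ge μ (j : ℤ)
    simpa using this
  refine tendsto_of_tendsto_of_tendsto_of_le_of_le tendsto_const_nhds h1 (fun _ => bot_le) ?_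
  intro K
  refine (measure_mono ?_).trans (measure_biUnion_finset_le _ _)
  rintro ω ⟨j, hj, hK⟩
  simp only [Set.mem_iUnion, Finset.mem_range]
  exact ⟨j, hj, hK⟩

lemma tendsto_bad_real (μ : Measure (Om E)) [IsProbabilityMeasure μ] (m : ℕ) :
    Tendsto (fun K : ℕ => μ.real (Bad m K)) atTop (𝓝 0) := by
  have := (ENNReal.tendsto_toReal ENNReal.zero_ne_top).comp (tendsto_bad μ m)
  rw [ENNReal.toReal_zero] at this
  exact this

end QF

/-! ### existence -/

lemma map_shift {μ : Measure (Om E)} {x y : ℝ} (hg : ∀ᵐ ω ∂μ, Good (x + y) ω) :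
    (μ.map (Theta x)).map (Theta y) = μ.map (Theta (x + y)) := by
  rw [Measure.map_map (measurable_Theta _) (measurable_Theta _)]
  refine Measure.map_congr ?_
  filter_upwards [hg] with ω hω
  exact Theta_Theta hω

lemma neg_map_Theta {μ : Measure (Om E)} {x : ℝ} (hg : ∀ᵐ ω ∂μ, Good x ω) :
    ∀ᵐ ω ∂(μ.map (Theta x)), NegL ω := by
  refine (ae_map_iff (measurable_Theta x).aemeasurable isClosed_neg.measurableSet).2 ?_
  filter_upwards [hg] with ω hω
  exact neg_Theta hω

lemma map_good {μ : Measure (Om E)} {x y : ℝ} (hg : ∀ᵐ ω ∂μ, Good (x + y) ω) :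
    ∀ᵐ ω ∂(μ.map (Theta x)), Good y ω := by
  refine (ae_map_iff (measurable_Theta x).aemeasurable (measurableSet_good y)).2 ?_
  filter_upwards [hg] with ω hω
  exact good_Theta.2 hω

lemma WC.map_rho {ι : Type*} {L : Filter ι} {ν : ι → Measure (Om E)} {μ : Measure (Om E)}
    (h : WC L ν μ) (e0 : E) (m : ℕ) :
    WC L (fun i => (ν i).map (rho e0 m)) (μ.map (rho e0 m)) := by
  intro f
  simp only [integral_map_bcf _ (measurable_rho e0 m)]
  exact h (f.compContinuous ⟨rho e0 m, continuous_rho e0 m⟩)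

lemma exists_compact_coord (μ : Measure (Om E)) [IsProbabilityMeasure μ] (n : ℤ)
    {ε : ENNReal} (hε : 0 < ε) :
    ∃ C : Set (NT × E), IsCompact C ∧ μ {ω : Om E | ω n ∉ C} ≤ ε := by
  have := Measure.isProbabilityMeasure_map (μ := μ) (f := fun ω : Om E => ω n)
    (measurable_pi_apply n).aemeasurable
  obtain ⟨C, hC, h⟩ := isTightMeasureSet_iff_exists_isCompact_measure_compl_le.1
    (isTightMeasureSet_singleton (μ := μ.map (fun ω : Om E => ω n))) ε hε
  refine ⟨C, hC, ?_⟩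
  have := h _ rfl
  rwa [Measure.map_apply (measurable_pi_apply n) hC.isClosed.measurableSet.compl] at this

section EX
variable {ι : Type*} {e0 : E} {L : Filter ι} [L.NeBot] [L.IsCountablyGenerated]
    {N : ι → ℝ → Measure (Om E)} {Q : Measure (Om E)}

lemma Fam.q_set (F : Fam e0 L N Q) (m : ℕ) {K y : ℝ} (hK : 0 ≤ K) (hy : K ≤ y)
    {A : Set (Om E)} (hA : MeasurableSet A) :
    ((Q.map (Theta y)).map (rho e0 m)) A ≤ (Q.map (hh e0 m K 0)) A + Q (Bad m K) := by
  have h := est_set (e0 := e0) (m := m) hK (neg_map_Theta (F.qgood (y - K))) (map_good (F.qgood _)) hA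
  rw [map_shift (F.qgood _), F.qstat (by linarith), sub_add_cancel] at h
  exact h

lemma Fam.q_int (F : Fam e0 L N Q) (m : ℕ) {K y : ℝ} (hK : 0 ≤ K) (hy : K ≤ y)
    (f : BoundedContinuousFunction (Om E) ℝ) :
    |(∫ ω, f ω ∂((Q.map (Theta y)).map (rho e0 m))) - ∫ ω, f ω ∂(Q.map (hh e0 m K 0))| ≤
      2 * ‖f‖ * Q.real (Bad m K) := by
  have := F.qprob
  have := pm_map Q (measurable_Theta (E := E) (y - K))
  have h := est_int (e0 := e0) (m := m) hK (neg_map_Theta (F.qgood (y - K))) (map_good (F.qgood _)) f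
  rw [map_shift (F.qgood _), F.qstat (by linarith), sub_add_cancel] at h
  exact h

lemma Fam.tight_coord (F : Fam e0 L N Q) (n : ℤ) {ε : ENNReal} (hε : 0 < ε) :
    ∃ C : Set (NT × E), IsCompact C ∧ ∀ k : ℕ, (Q.map (Theta k)) {ω : Om E | ω n ∉ C} ≤ ε := by
  have := F.qprob
  have hε2 : 0 < ε / 2 := ENNReal.half_pos hε.ne'
  obtain ⟨K, hK⟩ := ((tendsto_bad Q n.natAbs).eventually_le_const hε2).exists
  have := pm_map Q (measurable_hh e0 n.natAbs K 0)
  have := fun k : ℕ => pm_map Q (measurable_Theta (E := E) k)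
  obtain ⟨C0, hC0, h0⟩ := exists_compact_coord (Q.map (hh e0 n.natAbs K 0)) n hε2
  choose C hC h using fun k : ℕ => exists_compact_coord (Q.map (Theta k)) n hε
  refine ⟨C0 ∪ ⋃ k ∈ Finset.range K, C k,
    hC0.union ((Finset.range K).isCompact_biUnion fun k _ => hC k), fun k => ?_⟩
  by_cases hk : k < K
  · refine (measure_mono ?_).trans (h k)
    intro ω hω hc
    refine hω (Or.inr ?_)
    simp only [Set.mem_iUnion, Finset.mem_range]
    exact ⟨k, hk, hc⟩
  · have hA : MeasurableSet {ω : Om E | ω n ∉ C0} :=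
      (measurable_pi_apply (X := fun _ : ℤ => NT × E) n) hC0.isClosed.measurableSet.compl
    have hq := F.q_set n.natAbs (K := K) (y := k) (by positivity)
      (by exact_mod_cast not_lt.1 hk) hA
    rw [Measure.map_apply (measurable_rho _ _) hA] at hq
    refine (measure_mono ?_).trans (hq.trans ((add_le_add h0 hK).trans (ENNReal.add_halves ε).le))
    intro ω hω hc
    refine hω (Or.inl ?_)
    simp only [rho] at hc
    rwa [if_neg (by omega)] at hc

lemma Fam.exists_lim (F : Fam e0 L N Q) : ∃ (U : Ultrafilter ℕ) (P : Measure (Om E)),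
    IsProbabilityMeasure P ∧ (U : Filter ℕ) ≤ atTop ∧
      WC (U : Filter ℕ) (fun k : ℕ => Q.map (Theta k)) P := by
  have := F.qprob
  have hp := fun k : ℕ => pm_map Q (measurable_Theta (E := E) k)
  set S : Set (ProbabilityMeasure (Om E)) :=
    Set.range fun k : ℕ => toPM (Q.map (Theta k)) (hp k) with hS
  have ht : IsTightMeasureSet {((μ : ProbabilityMeasure (Om E)) : Measure (Om E)) | μ ∈ S} := by
    rw [isTightMeasureSet_iff_exists_isCompact_measure_compl_le]
    intro ε hε
    obtain ⟨ε', hε', hsum⟩ := ENNReal.exists_pos_sum_of_countable' hε.ne' ℤ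
    choose C hC h using fun n : ℤ => F.tight_coord n (hε' n)
    refine ⟨Set.univ.pi C, isCompact_univ_pi hC, ?_⟩
    rintro _ ⟨_, ⟨k, rfl⟩, rfl⟩
    change (Q.map (Theta k)) (Set.univ.pi C)ᶜ ≤ ε
    calc (Q.map (Theta k)) (Set.univ.pi C)ᶜ ≤ (Q.map (Theta k)) (⋃ n : ℤ, {ω : Om E | ω n ∉ C n}) := by
          refine measure_mono fun ω hω => ?_
          simp only [Set.mem_compl_iff, Set.mem_univ_pi, not_forall] at hω
          simpa using hω
      _ ≤ ∑' n : ℤ, (Q.map (Theta k)) {ω : Om E | ω n ∉ C n} := measure_iUnion_le _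
      _ ≤ ∑' n : ℤ, ε' n := ENNReal.tsum_le_tsum fun n => h n k
      _ ≤ ε := hsum.le
  have hc := isCompact_closure_of_isTightMeasureSet ht
  set U := Filter.hyperfilter ℕ
  obtain ⟨P, -, hP⟩ := hc.ultrafilter_le_nhds'
    (U.map fun k : ℕ => toPM (Q.map (Theta k)) (hp k))
    (Ultrafilter.mem_map.2 (Filter.mem_of_superset Filter.univ_mem
      fun k _ => subset_closure ⟨k, rfl⟩))
  refine ⟨U, (P : Measure (Om E)), P.2, Nat.hyperfilter_le_atTop, ?_⟩
  have hP2 : IsProbabilityMeasure (P : Measure (Om E)) := P.2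
  exact WC_iff.2 hP

/-- The characterising properties of the limit law. -/
structure Sol (e0 : E) (Q P : Measure (Om E)) : Prop where
  prob : IsProbabilityMeasure P
  neg : ∀ᵐ ω ∂P, NegL ω
  plus : P.map (rho e0 0) = Q
  bound : ∀ (m : ℕ) (K : ℝ), 0 ≤ K → ∀ f : BoundedContinuousFunction (Om E) ℝ,
    |(∫ ω, f ω ∂(P.map (rho e0 m))) - ∫ ω, f ω ∂(Q.map (hh e0 m K 0))| ≤
      2 * ‖f‖ * Q.real (Bad m K)

lemma Sol.unique {P P' : Measure (Om E)} [IsProbabilityMeasure Q] (h : Sol e0 Q P)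
    (h' : Sol e0 Q P') : P = P' := by
  have := h.prob
  have := h'.prob
  refine ext_of_rho e0 fun m => ?_
  have := pm_map P (measurable_rho e0 m)
  have := pm_map P' (measurable_rho e0 m)
  refine ext_of_forall_integral_eq_of_IsFiniteMeasure fun f => ?_
  have hl : Tendsto (fun K : ℕ => 2 * ‖f‖ * Q.real (Bad m K) + 2 * ‖f‖ * Q.real (Bad m K))
      atTop (𝓝 0) := by
    have := ((tendsto_bad_real Q m).const_mul (2 * ‖f‖)).add
      ((tendsto_bad_real Q m).const_mul (2 * ‖f‖))
    simpa using this
  have h0 : |(∫ ω, f ω ∂(P.map (rho e0 m))) - ∫ ω, f ω ∂(P'.map (rho e0 m))| ≤ 0 := by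
    refine ge_of_tendsto' hl fun K => ?_
    have h1 := h.bound m K (by positivity) f
    have h2 := h'.bound m K (by positivity) f
    rw [abs_sub_comm] at h2
    exact (abs_sub_le _ _ _).trans (add_le_add h1 h2)
  exact sub_eq_zero.1 (abs_eq_zero.1 (le_antisymm h0 (abs_nonneg _)))

lemma Fam.exists_sol (F : Fam e0 L N Q) : ∃ P, Sol e0 Q P := by
  obtain ⟨U, P, hP, hU, hw⟩ := F.exists_lim
  have := F.qprob
  have := fun k : ℕ => pm_map Q (measurable_Theta (E := E) k)
  refine ⟨P, hP, ?_, ?_, ?_⟩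
  · exact hw.ae_closed isClosed_neg fun k => neg_map_Theta (F.qgood k)
  · have h1 := hw.map_rho e0 0
    have e : ∀ k : ℕ, (Q.map (Theta k)).map (rho e0 0) = Q := fun k => F.qstat (by positivity)
    simp only [e] at h1
    have := pm_map P (measurable_rho e0 0)
    exact h1.unique fun f => tendsto_const_nhds
  · intro m K hK f
    have h1 := ((hw.map_rho e0 m f).sub_const (∫ ω, f ω ∂(Q.map (hh e0 m K 0)))).abs
    refine le_of_tendsto h1 (hU ?_)
    obtain ⟨n, hn⟩ := exists_nat_ge K
    filter_upwards [eventually_ge_atTop n] with k hk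
    exact F.q_int m hK (hn.trans (by exact_mod_cast hk)) f

lemma Sol.good0 (F : Fam e0 L N Q) {P : Measure (Om E)} (h : Sol e0 Q P) {x : ℝ} (hx : 0 ≤ x) :
    ∀ᵐ ω ∂P, Good x ω := by
  have h1 := F.qne x
  rw [← h.plus] at h1
  have h2 := ae_of_ae_map (measurable_rho e0 0).aemeasurable h1
  filter_upwards [h2, h.neg] with ω h3 h4
  rw [h4.hitA_rho hx] at h3
  exact h4.good hx h3

lemma Sol.conv (F : Fam e0 L N Q) {P : Measure (Om E)} (h : Sol e0 Q P) (y : ℝ) (m : ℕ) :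
    WC L (fun i => (N i y).map (rho e0 m)) (P.map (rho e0 m)) := by
  have := F.qprob
  have := F.prob
  have hpr := fun i x => pm_map (N i x) (measurable_rho e0 0)
  intro f
  rw [Metric.tendsto_nhds]
  intro ε hε
  -- choose the level
  have hl : Tendsto (fun K : ℕ => 2 * ‖f‖ * Q.real (Bad m K)) atTop (𝓝 0) := by
    simpa using (tendsto_bad_real Q m).const_mul (2 * ‖f‖)
  obtain ⟨K0, hK0⟩ := (hl.eventually_lt_const (show (0 : ℝ) < ε / 4 by positivity)).exists
  obtain ⟨K, hKa, hK⟩ :=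
    ((frequently_noatom Q K0).and_eventually self_mem_nhdsWithin).exists
  have hKK : (K0 : ℝ) < K := hK
  have hKpos : 0 ≤ K := (Nat.cast_nonneg K0).trans hKK.le
  have hbad : 2 * ‖f‖ * Q.real (Bad m K) < ε / 4 := by
    refine lt_of_le_of_lt ?_ hK0
    have := measureReal_mono (μ := Q) (bad_anti (E := E) (m := m) hKK.le)
    gcongr
  -- weak convergence of truncated translates
  have hwc : WC L (fun i => ((N i (y - K)).map (rho e0 0)).map (hh e0 m K 0))
      (Q.map (hh e0 m K 0)) := by
    refine (F.conv (y - K)).map (measurable_hh e0 m K 0) ?_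
    have := ae_cont_hh e0 m 0 hKpos F.qneg (F.qgood K) hKa
    rwa [F.qmap] at this
  have hev1 := (Metric.tendsto_nhds.1 (hwc f)) (ε / 4) (by positivity)
  have hev2 : ∀ᶠ i in L, 2 * ‖f‖ * ((N i (y - K)).map (rho e0 0)).real (Bad m K) < ε / 4 := by
    have hlim := (F.conv (y - K)).closed (isClosed_Bad (E := E) m K)
    -- pick a number above the limsup
    have hcont : ∃ δ : ℝ, 0 < δ ∧ 2 * ‖f‖ * (Q.real (Bad m K) + δ) < ε / 4 := by
      have ht : Tendsto (fun δ : ℝ => 2 * ‖f‖ * (Q.real (Bad (E := E) m K) + δ)) (𝓝[>] 0)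
          (𝓝 (2 * ‖f‖ * (Q.real (Bad (E := E) m K) + 0))) := by
        refine tendsto_nhdsWithin_of_tendsto_nhds ?_
        exact Continuous.tendsto (by fun_prop) 0
      rw [add_zero] at ht
      obtain ⟨δ, h1, h2⟩ := ((ht.eventually_lt_const hbad).and self_mem_nhdsWithin).exists
      exact ⟨δ, h2, h1⟩
    obtain ⟨δ, hδ, hδ'⟩ := hcont
    have hlt : limsup (fun i => ((N i (y - K)).map (rho e0 0)) (Bad m K)) L <
        Q (Bad m K) + ENNReal.ofReal δ := by
      refine hlim.trans_lt (ENNReal.lt_add_right (measure_ne_top _ _) ?_)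
      simpa using hδ
    filter_upwards [eventually_lt_of_limsup_lt hlt] with i hi
    refine lt_of_le_of_lt ?_ hδ'
    have h3 : ((N i (y - K)).map (rho e0 0)).real (Bad m K) ≤ Q.real (Bad m K) + δ := by
      have := ENNReal.toReal_mono (by finiteness) hi.le
      rwa [ENNReal.toReal_add (measure_ne_top _ _) (by finiteness),
        ENNReal.toReal_ofReal hδ.le] at this
    gcongr
  filter_upwards [hev1, hev2] with i h1 h2
  have h3 := est_int (e0 := e0) (m := m) hKpos (F.neg i (y - K)) (F.good i (y - K) K) f
  rw [F.shift, sub_add_cancel] at h3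
  have h4 := h.bound m K hKpos f
  rw [Real.dist_eq] at h1 ⊢
  rw [abs_sub_lt_iff] at *
  rw [abs_sub_le_iff] at *
  constructor <;> linarith [h1.1, h1.2, h3.1, h3.2, h4.1, h4.2]

lemma Sol.convP (F : Fam e0 L N Q) {P : Measure (Om E)} (h : Sol e0 Q P) (y : ℝ) :
    WC L (fun i => N i y) P := by
  have := h.prob
  have := F.prob
  exact WC_of_rho e0 fun m => h.conv F y m

lemma Sol.stat (F : Fam e0 L N Q) {P : Measure (Om E)} (h : Sol e0 Q P) (x : ℝ) :
    P.map (Theta x) = P := by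
  have := h.prob
  have h0 : ∀ x : ℝ, 0 ≤ x → P.map (Theta x) = P := fun x hx => by
    have := pm_map P (measurable_Theta (E := E) x)
    exact ext_of_rho e0 fun m =>
      stat_plus F h.neg (fun x hx => h.good0 F hx) m (fun y => h.conv F y m) hx
  rcases le_total 0 x with hx | hx
  · exact h0 x hx
  · have h1 := map_shift (μ := P) (x := -x) (y := x) (by
      rw [neg_add_cancel]; exact h.good0 F le_rfl)
    rw [neg_add_cancel, h0 (-x) (by linarith), h0 0 le_rfl] at h1
    exact h1

/-! ### uniqueness -/

lemma Sol.of_stat (F : Fam e0 L N Q) {P : Measure (Om E)} [IsProbabilityMeasure P]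
    (hs : ∀ x, P.map (Theta x) = P) (hp : P.map (rho e0 0) = Q) : Sol e0 Q P := by
  have hpos : ∀ᵐ ω ∂P, (0 : EReal) ≤ ((ω 0).1 : EReal) := by
    have h1 := F.qpos
    rw [← hp] at h1
    filter_upwards [ae_of_ae_map (measurable_rho e0 0).aemeasurable h1] with ω hω
    simpa [rho] using hω
  -- zero probability of bad past at level zero
  have hG0 : ∀ᵐ ω ∂P, Good 0 ω := by
    have hle : ∀ K : ℕ, P {ω : Om E | ¬ Good 0 ω} ≤
        P {ω : Om E | ((K : ℝ) : EReal) ≤ ((ω 0).1 : EReal)} := by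
      intro K
      have hm : MeasurableSet {ω : Om E | ¬ Good 0 ω} := (measurableSet_good 0).compl
      conv_lhs => rw [← hs K]
      rw [Measure.map_apply (measurable_Theta _) hm]
      have hpos' := hpos
      rw [← hs K] at hpos'
      refine measure_mono_ae ?_
      filter_upwards [ae_of_ae_map (measurable_Theta _).aemeasurable hpos'] with ω h1 h2
      have h3 : ¬ Good (K : ℝ) ω := fun hc => h2 (good_Theta.2 (by simpa using hc))
      have h4 : (0 : EReal) ≤ ((ω 0).1 : EReal) - ((K : ℝ) : EReal) := by
        simpa [Theta, hitT_not_good h3] using h1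
      change ((K : ℝ) : EReal) ≤ ((ω 0).1 : EReal)
      clear h1 h2 h3
      generalize hab : ((ω 0).1 : EReal) = a at h4 ⊢
      clear hab
      induction a with
      | bot => simp at h4
      | top => exact le_top
      | coe a =>
        rw [← EReal.coe_sub] at h4
        have : 0 ≤ a - K := EReal.coe_le_coe_iff.1 h4
        exact EReal.coe_le_coe_iff.2 (by linarith)
    have := ge_of_tendsto' (tendsto_coord_ge P 0) hle
    exact le_antisymm this bot_le
  have hG : ∀ x, ∀ᵐ ω ∂P, Good x ω := fun x => by
    have h1 := hG0
    rw [← hs x] at h1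
    filter_upwards [ae_of_ae_map (measurable_Theta _).aemeasurable h1] with ω hω
    simpa using good_Theta.1 hω
  have hn : ∀ᵐ ω ∂P, NegL ω := by
    have := neg_map_Theta (hG 0)
    rwa [hs] at this
  refine ⟨inferInstance, hn, hp, fun m K hK f => ?_⟩
  have h3 := est_int (e0 := e0) (m := m) hK hn (hG K) f
  rwa [hs, hp] at h3

end EX

/-! ### the main theorem -/

lemma ae_of_mass {μ : Measure (Om E)} [IsProbabilityMeasure μ] {S T : Set (Om E)} (hS : μ S = 1)
    (hST : S ⊆ T) (hT : MeasurableSet T) : ∀ᵐ ω ∂μ, ω ∈ T :=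
  (prob_compl_eq_zero_iff hT).2 (le_antisymm prob_le_one (hS ▸ measure_mono hST))

lemma nonempty_of_limsup {ω : Om E}
    (h : Filter.limsup (fun n : ℤ => ((ω n).1 : EReal)) atTop = ⊤) (x : ℝ) :
    (hitA x ω).Nonempty := by
  have h1 : ∃ᶠ n : ℤ in atTop, (x : EReal) < ((ω n).1 : EReal) :=
    frequently_lt_of_lt_limsup (h := by rw [h]; exact EReal.coe_lt_top x)
  obtain ⟨n, hn⟩ := h1.exists
  exact ⟨n, hn⟩

lemma bdd_of_tendsto {ω : Om E}
    (h : Tendsto (fun n : ℤ => ((ω n).1 : EReal)) atBot (𝓝 ⊥)) (x : ℝ) :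
    BddBelow (hitA x ω) := by
  obtain ⟨b, hb⟩ := eventually_atBot.1 (h.eventually_lt_const (EReal.bot_lt_coe x))
  refine ⟨b, fun n hn => ?_⟩
  by_contra hc
  exact absurd (hb n (le_of_lt (not_le.1 hc))) (not_lt.2 (le_of_lt hn))

lemma fam_main
    (e0 : E)
    (Pv : ℝ → Measure (Om E))
    (hPprob : ∀ v : ℝ, 0 < v → IsProbabilityMeasure (Pv v))
    (hPmass : ∀ v : ℝ, 0 < v →
      Pv v {ω : Om E | Tendsto (fun n : ℤ => ((ω n).1 : EReal)) atBot (𝓝 ⊥) ∧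
        Filter.limsup (fun n : ℤ => ((ω n).1 : EReal)) atTop = ⊤} = 1)
    (Q : Measure (Om E)) (hQprob : IsProbabilityMeasure Q)
    (hQplus : Q {ω : Om E | ∀ n : ℤ, n < 0 → ω n = (botNT, e0)} = 1)
    (hQmass : Q {ω : Om E |
      Filter.limsup (fun n : ℤ => ((ω n).1 : EReal)) atTop = ⊤} = 1)
    (hconv : ∀ x : ℝ, ∀ f : BoundedContinuousFunction (Om E) ℝ,
      Tendsto (fun v : ℝ => ∫ ω, f ω ∂(((Pv v).map (Theta x)).map (plusProj e0)))
        (𝓝[>] (0 : ℝ)) (𝓝 (∫ ω, f ω ∂Q))) :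
    Fam e0 (comap (Subtype.val : Set.Ioi (0 : ℝ) → ℝ) (𝓝[>] (0 : ℝ)))
      (fun i x => (Pv i).map (Theta x)) Q := by
  have hp : ∀ i : Set.Ioi (0 : ℝ), IsProbabilityMeasure (Pv i) := fun i => hPprob i i.2
  have hg : ∀ (i : Set.Ioi (0 : ℝ)) (x : ℝ), ∀ᵐ ω ∂(Pv i), Good x ω := fun i x =>
    ae_of_mass (hPmass i i.2) (fun ω hω => ⟨nonempty_of_limsup hω.2 x, bdd_of_tendsto hω.1 x⟩)
      (measurableSet_good x)
  refine ⟨fun i x => pm_map _ (measurable_Theta x), fun i x => neg_map_Theta (hg i x), ?_,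
    fun i x y => map_good (hg i _), fun i x y => map_shift (hg i _), ?_, hQprob, ?_, ?_⟩
  · intro i x
    refine (ae_map_iff (measurable_Theta x).aemeasurable
      (measurableSet_le measurable_const (measurable_coord 0))).2 ?_
    filter_upwards [hg i x] with ω hω
    exact pos_Theta hω
  · intro x f
    have := (hconv x f).comp (tendsto_comap (f := (Subtype.val : Set.Ioi (0 : ℝ) → ℝ)))
    rw [plusProj_eq_rho] at this
    exact this
  · refine ae_of_mass hQplus (le_refl _) ?_
    have : {ω : Om E | ∀ n : ℤ, n < 0 → ω n = (botNT, e0)} =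
        ⋂ n : ℤ, ⋂ _ : n < 0, {ω : Om E | ω n = (botNT, e0)} := by ext; simp
    change MeasurableSet {ω : Om E | ∀ n : ℤ, n < 0 → ω n = (botNT, e0)}
    rw [this]
    exact MeasurableSet.iInter fun n => MeasurableSet.iInter fun _ =>
      (isClosed_eq (continuous_apply n) continuous_const).measurableSet
  · exact fun x => ae_of_mass hQmass (fun ω hω => nonempty_of_limsup hω x)
      (measurableSet_nonempty x)

/-- **Lemma 2 (abstract convergence to a spatially stationary law).**
If `(P_v)_{v>0}` are probability laws on `Ω`, concentrated on sequences whose first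
coordinate tends to `-∞` at `-∞` and has `limsup = +∞` at `+∞`, and if for every `x ∈ ℝ`
the laws `(P_v ∘ Θ_x⁻¹)_+` converge weakly as `v → 0` to a law `Q` on `Ω_+`, then there
exists a unique spatially stationary probability law `P` on `Ω` with `P_+ = Q`, and
moreover `P_v ∘ Θ_x⁻¹` converges weakly to `P` for every `x`. -/
theorem spatially_stationary_limit
    (e0 : E) (he0 : IsOpen ({e0} : Set E))
    (Pv : ℝ → Measure (Om E))
    (hPprob : ∀ v : ℝ, 0 < v → IsProbabilityMeasure (Pv v))
    (hPmass : ∀ v : ℝ, 0 < v →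
      Pv v {ω : Om E | Tendsto (fun n : ℤ => ((ω n).1 : EReal)) atBot (𝓝 ⊥) ∧
        Filter.limsup (fun n : ℤ => ((ω n).1 : EReal)) atTop = ⊤} = 1)
    (Q : Measure (Om E)) (hQprob : IsProbabilityMeasure Q)
    (hQplus : Q {ω : Om E | ∀ n : ℤ, n < 0 → ω n = (botNT, e0)} = 1)
    (hQmass : Q {ω : Om E |
      Filter.limsup (fun n : ℤ => ((ω n).1 : EReal)) atTop = ⊤} = 1)
    (hconv : ∀ x : ℝ, ∀ f : BoundedContinuousFunction (Om E) ℝ,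
      Tendsto (fun v : ℝ => ∫ ω, f ω ∂(((Pv v).map (Theta x)).map (plusProj e0)))
        (𝓝[>] (0 : ℝ)) (𝓝 (∫ ω, f ω ∂Q))) :
    ∃ P : Measure (Om E),
      (IsProbabilityMeasure P ∧ (∀ x : ℝ, P.map (Theta x) = P) ∧
        P.map (plusProj e0) = Q) ∧
      (∀ P' : Measure (Om E), IsProbabilityMeasure P' →
        (∀ x : ℝ, P'.map (Theta x) = P') → P'.map (plusProj e0) = Q → P' = P) ∧
      (∀ x : ℝ, ∀ f : BoundedContinuousFunction (Om E) ℝ,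
        Tendsto (fun v : ℝ => ∫ ω, f ω ∂((Pv v).map (Theta x)))
          (𝓝[>] (0 : ℝ)) (𝓝 (∫ ω, f ω ∂P))) := by
  have F := fam_main e0 Pv hPprob hPmass Q hQprob hQplus hQmass hconv
  have hr : Set.range (Subtype.val : Set.Ioi (0 : ℝ) → ℝ) ∈ 𝓝[>] (0 : ℝ) := by
    rw [Subtype.range_coe]; exact self_mem_nhdsWithin
  have hne : (comap (Subtype.val : Set.Ioi (0 : ℝ) → ℝ) (𝓝[>] (0 : ℝ))).NeBot :=
    comap_neBot_iff_compl_range.2 fun hc => by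
      have := inter_mem hr hc
      rw [Set.inter_compl_self] at this
      exact empty_notMem _ this
  obtain ⟨P, hP⟩ := F.exists_sol
  refine ⟨P, ⟨hP.prob, hP.stat F, ?_⟩, ?_, ?_⟩
  · rw [plusProj_eq_rho]; exact hP.plus
  · intro P' h1 h2 h3
    rw [plusProj_eq_rho] at h3
    exact (Sol.of_stat F h2 h3).unique hP
  · intro x f
    exact (tendsto_comap'_iff hr).1 (hP.convP F x f)
end
end

section
/- For real numbers 0 < u ≤ a, 0 < v ≤ a, define g_{u,v}(s) = (√2 (u³ + v³)/(s² √(uv))) · exp(−2(v² − uv + u²)/s) · ∫_0^{4uv/s} e^{−3θ/2} dθ/√(πθ) for s > 0. Then g_{u,v}(s) ≤ (8√2/√π) a³ s^{−5/2} for all s > 0, and consequently for every t > 0, ∫_{t a²}^∞ g_{u,v}(s) ds ≤ (16√2/(3√π)) t^{−3/2}. -/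
open MeasureTheory ProbabilityTheory Filter Real Topology

noncomputable section

theorem inner_bound (x : ℝ) (hx : 0 ≤ x) :
    (∫ θ in (0 : ℝ)..x, Real.exp (-3 * θ / 2) / Real.sqrt (Real.pi * θ))
      ≤ 2 * Real.sqrt x / Real.sqrt Real.pi := by
  have h2 : (∫ θ in (0 : ℝ)..x, (1 / Real.sqrt Real.pi) * θ ^ (-(1 : ℝ) / 2))
      = 2 * Real.sqrt x / Real.sqrt Real.pi := by
    rw [intervalIntegral.integral_const_mul, integral_rpow (Or.inl (by norm_num))]
    rw [Real.sqrt_eq_rpow x, Real.zero_rpow (by norm_num)]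
    norm_num
    ring
  rw [← h2, intervalIntegral.integral_of_le hx, intervalIntegral.integral_of_le hx]
  apply integral_mono_of_nonneg
  · exact Eventually.of_forall fun θ => by positivity
  · have := (intervalIntegral.intervalIntegrable_rpow' (a := 0) (b := x)
      (r := -(1 : ℝ) / 2) (by norm_num)).const_mul (1 / Real.sqrt Real.pi)
    rw [intervalIntegrable_iff_integrableOn_Ioc_of_le hx] at this
    exact this
  · filter_upwards [ae_restrict_mem measurableSet_Ioc] with θ hθ
    have h0 : 0 < θ := hθ.1
    have : θ ^ (-(1 : ℝ) / 2) = 1 / Real.sqrt θ := by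
      rw [Real.sqrt_eq_rpow, neg_div, Real.rpow_neg h0.le]
      simp
    simp only [this]
    rw [Real.sqrt_mul Real.pi_pos.le, div_mul_div_comm, one_mul]
    gcongr
    exact Real.exp_le_one_iff.2 (by linarith)

/-- **Lemma 10.2 (uniform tail bound for arch durations).** For `0 < u ≤ a` and
`0 < v ≤ a`, the conditional arch-duration density
`g_{u,v}(s) = (√2 (u³+v³)/(s² √(uv))) e^{-2(v² - uv + u²)/s} ∫_0^{4uv/s} e^{-3θ/2} dθ/√(πθ)`
satisfies `g_{u,v}(s) ≤ (8√2/√π) a³ s^{-5/2}` for all `s > 0`, and hence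
`∫_{ta²}^∞ g_{u,v}(s) ds ≤ (16√2/(3√π)) t^{-3/2}` for every `t > 0`. -/
theorem arch_duration_tail_bound (a u v : ℝ)
    (hu : 0 < u) (hua : u ≤ a) (hv : 0 < v) (hva : v ≤ a)
    (g : ℝ → ℝ)
    (hg : ∀ s : ℝ, g s =
      (Real.sqrt 2 * (u ^ 3 + v ^ 3) / (s ^ 2 * Real.sqrt (u * v))) *
        Real.exp (-2 * (v ^ 2 - u * v + u ^ 2) / s) *
        ∫ θ in (0 : ℝ)..(4 * u * v / s),
          Real.exp (-3 * θ / 2) / Real.sqrt (Real.pi * θ)) :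
    (∀ s : ℝ, 0 < s →
      g s ≤ (8 * Real.sqrt 2 / Real.sqrt Real.pi) * a ^ 3 * s ^ (-(5 : ℝ) / 2)) ∧
    (∀ t : ℝ, 0 < t →
      (∫ s in Set.Ioi (t * a ^ 2), g s) ≤
        (16 * Real.sqrt 2 / (3 * Real.sqrt Real.pi)) * t ^ (-(3 : ℝ) / 2)) := by
  have ha : 0 < a := hu.trans_le hua
  have huv : 0 < u * v := mul_pos hu hv
  have key : ∀ s : ℝ, 0 < s →
      g s ≤ (8 * Real.sqrt 2 / Real.sqrt Real.pi) * a ^ 3 * s ^ (-(5 : ℝ) / 2) := by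
    intro s hs
    have hI := inner_bound (4 * u * v / s) (by positivity)
    have hq : 0 ≤ v ^ 2 - u * v + u ^ 2 := by nlinarith [sq_nonneg (u - v)]
    have hE : Real.exp (-2 * (v ^ 2 - u * v + u ^ 2) / s) ≤ 1 := by
      apply Real.exp_le_one_iff.2
      apply div_nonpos_of_nonpos_of_nonneg _ hs.le
      linarith
    have hsq : Real.sqrt (4 * u * v / s) = 2 * Real.sqrt (u * v) / Real.sqrt s := by
      rw [Real.sqrt_div (by positivity), mul_assoc, Real.sqrt_mul (by norm_num)]
      rw [show (4 : ℝ) = 2 ^ 2 by norm_num, Real.sqrt_sq (by norm_num)]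
    have hsp : s ^ (-(5 : ℝ) / 2) = 1 / (s ^ 2 * Real.sqrt s) := by
      rw [Real.sqrt_eq_rpow, neg_div, Real.rpow_neg hs.le, ← Real.rpow_natCast,
        ← Real.rpow_add hs]
      norm_num
    have hu3 : u ^ 3 ≤ a ^ 3 := by gcongr
    have hv3 : v ^ 3 ≤ a ^ 3 := by gcongr
    have hru : 0 < Real.sqrt (u * v) := Real.sqrt_pos.2 huv
    have hrs : 0 < Real.sqrt s := Real.sqrt_pos.2 hs
    have hrp : 0 < Real.sqrt Real.pi := Real.sqrt_pos.2 Real.pi_pos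
    rw [hsq] at hI
    rw [hg s, hsp]
    calc _ ≤ (Real.sqrt 2 * (a ^ 3 + a ^ 3) / (s ^ 2 * Real.sqrt (u * v))) * 1 *
          (2 * (2 * Real.sqrt (u * v) / Real.sqrt s) / Real.sqrt Real.pi) := by
          have h0 : 0 ≤ ∫ θ in (0 : ℝ)..(4 * u * v / s),
              Real.exp (-3 * θ / 2) / Real.sqrt (Real.pi * θ) :=
            intervalIntegral.integral_nonneg (by positivity) fun θ _ => by positivity
          gcongr
      _ = _ := by
          field_simp
          ring
  refine ⟨key, fun t ht => ?_⟩
  have hT : 0 < t * a ^ 2 := by positivity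
  have h2 : (∫ s in Set.Ioi (t * a ^ 2),
      (8 * Real.sqrt 2 / Real.sqrt Real.pi) * a ^ 3 * s ^ (-(5 : ℝ) / 2))
      = (16 * Real.sqrt 2 / (3 * Real.sqrt Real.pi)) * t ^ (-(3 : ℝ) / 2) := by
    rw [integral_const_mul, integral_Ioi_rpow_of_lt (by norm_num) hT]
    rw [show (-(5 : ℝ) / 2 + 1) = -(3 : ℝ) / 2 by norm_num,
      Real.mul_rpow ht.le (by positivity), ← Real.rpow_natCast a 2, ← Real.rpow_mul ha.le]
    have : a ^ (((2 : ℕ) : ℝ) * (-(3 : ℝ) / 2)) = 1 / a ^ 3 := by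
      rw [show ((2 : ℕ) : ℝ) * (-(3 : ℝ) / 2) = -((3 : ℕ) : ℝ) by norm_num,
        Real.rpow_neg ha.le, Real.rpow_natCast, one_div]
    rw [this]
    field_simp
    ring
  rw [← h2]
  apply integral_mono_of_nonneg
  · filter_upwards [ae_restrict_mem measurableSet_Ioi] with s hs
    have hs0 : 0 < s := hT.trans hs
    have h0 : 0 ≤ ∫ θ in (0 : ℝ)..(4 * u * v / s),
        Real.exp (-3 * θ / 2) / Real.sqrt (Real.pi * θ) :=
      intervalIntegral.integral_nonneg (by positivity) fun θ _ => by positivity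
    rw [hg s]
    simp only [Pi.zero_apply]
    positivity
  · exact (integrableOn_Ioi_rpow_of_lt (by norm_num) hT).const_mul _
  · filter_upwards [ae_restrict_mem measurableSet_Ioi] with s hs
    exact key s (hT.trans hs)
end
end
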